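/- The function R ↦ λ₁(Γ_R), assigning to R the first Rayleigh quotient of the Laplacian on Γ_R with Dirichlet conditions on ∂Γ_R∖Σ_R and Neumann conditions on Σ_R, is real-analytic on the interval (0,∞). -/

import Mathlib

/-!
Let `Q = (-1, 0)²` be the corner square of `Γ_R`. The Poincaré inequality for mean-zero functions
on `Q`, together with the one-dimensional Dirichlet inequality across the two arms, gives
`π² ∫ u² ≤ ∫ |∇u|² + π² (∫_Q u)²` on `Γ_R`, whereas an explicit trial function shows
`λ₁(Γ_R) < π²`. Below `π²` the pencil `∫ |∇u|² - λ ∫ u²` therefore becomes coercive after adding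
the square of a single functional `⟪e, u⟫`. If `M_λ` denotes the resulting invertible operator,
`λ₁` solves the scalar equation `⟪e, M_λ⁻¹ e⟫ = 1`, whose left-hand side has nonzero derivative in
`λ` there. A diffeomorphism `t ↦ t + s χ t` applied to both coordinates carries `Γ_R` to
`Γ_{R+s}`; pulling the two forms back to `Γ_R` makes them analytic in `s`, and the implicit
function theorem applies to the scalar equation.
-/

noncomputable section
open MeasureTheory Set Real

/-- The interval `I = (-1,0)`. -/
def II : Set ℝ := Set.Ioo (-1) 0

/-- The broken guide `Γ = {x ∈ ℝ² : -1 < min(x₁,x₂) < 0}`. -/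
def Gam : Set (ℝ × ℝ) := {p | -1 < min p.1 p.2 ∧ min p.1 p.2 < 0}

/-- The box `□_L = {x : max(|x₁+1|,|x₂+1|) < L}`. -/
def Box (L : ℝ) : Set (ℝ × ℝ) := {p | |p.1 + 1| < L ∧ |p.2 + 1| < L}

/-- The finite guide `Γ_R = Γ ∩ □_{R+1}`. -/
def GamR (R : ℝ) : Set (ℝ × ℝ) := Gam ∩ Box (R + 1)

/-- The Neumann part `Σ_R = ∂Γ_R ∩ ∂□_{R+1}` of the boundary. -/
def Sig (R : ℝ) : Set (ℝ × ℝ) := frontier (GamR R) ∩ frontier (Box (R + 1))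

/-- The Dirichlet part `∂Γ_R ∖ Σ_R` of the boundary. -/
def DirB (R : ℝ) : Set (ℝ × ℝ) := frontier (GamR R) \ Sig R

/-- Squared gradient `|∇u|² = (∂₁u)² + (∂₂u)²`. -/
def gradSq2 (u : ℝ × ℝ → ℝ) (p : ℝ × ℝ) : ℝ :=
  (fderiv ℝ u p (1, 0)) ^ 2 + (fderiv ℝ u p (0, 1)) ^ 2

/-- Admissible functions for the mixed problem on `Γ_R`: `C¹` up to the boundary
(modelled by a globally `C¹` extension) vanishing on the Dirichlet part. -/
def AdmR (R : ℝ) (u : ℝ × ℝ → ℝ) : Prop :=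
  ContDiff ℝ 1 u ∧ ∀ p ∈ DirB R, u p = 0

/-- First Rayleigh quotient `λ₁(Γ_R)` of the mixed Dirichlet–Neumann Laplacian on `Γ_R`. -/
def lamR (R : ℝ) : ℝ :=
  sInf {r | ∃ u : ℝ × ℝ → ℝ, AdmR R u ∧ (∫ p in GamR R, (u p) ^ 2) ≠ 0 ∧
    r = (∫ p in GamR R, gradSq2 u p) / ∫ p in GamR R, (u p) ^ 2}

/-- First Rayleigh quotient `λ₁(Γ)` of the Dirichlet Laplacian on the broken guide `Γ`. -/
def lamG : ℝ :=
  sInf {r | ∃ u : ℝ × ℝ → ℝ, ContDiff ℝ 1 u ∧ HasCompactSupport u ∧ tsupport u ⊆ Gam ∧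
    (∫ p in Gam, (u p) ^ 2) ≠ 0 ∧
    r = (∫ p in Gam, gradSq2 u p) / ∫ p in Gam, (u p) ^ 2}

/-- `ω = √(π² − λ₁(Γ))`. -/
def omega : ℝ := Real.sqrt (π ^ 2 - lamG)

open Filter Topology RealInnerProductSpace ContDiff

/-! ### Analytic perturbation of the bottom of a pencil -/

section Pencil

variable {V : Type*} [NormedAddCommGroup V] [InnerProductSpace ℝ V]

/-- The lower bounds of the Rayleigh quotient `⟪A v, v⟫ / ⟪B v, v⟫`. The largest of them is the
bottom of the pencil `A - c • B`. -/
def pencilBounds (A B : V →L[ℝ] V) : Set ℝ := {c | ∀ v, c * ⟪B v, v⟫ ≤ ⟪A v, v⟫}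

/-- The pencil `A - c • B` corrected by the rank-one form `v ↦ ⟪e, v⟫ ^ 2`, which may turn it into
an invertible operator even where `c` is the bottom of the pencil. -/
def bordered (A B : V →L[ℝ] V) (e : V) (c : ℝ) : V →L[ℝ] V :=
  A - c • B + InnerProductSpace.rankOne ℝ e e

variable {A B M : V →L[ℝ] V} {e w : V} {c : ℝ}

theorem inner_bordered_self (v : V) :
    ⟪bordered A B e c v, v⟫ = ⟪A v, v⟫ - c * ⟪B v, v⟫ + ⟪e, v⟫ ^ 2 := by
  simp [bordered, inner_add_left, inner_sub_left, real_inner_smul_left, sq]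

theorem isSymmetric_bordered (hA : (A : V →ₗ[ℝ] V).IsSymmetric)
    (hB : (B : V →ₗ[ℝ] V).IsSymmetric) (e : V) (c : ℝ) :
    (bordered A B e c : V →ₗ[ℝ] V).IsSymmetric := by
  intro v w
  have hA' := hA v w
  have hB' := hB v w
  simp only [ContinuousLinearMap.coe_coe] at hA' hB' ⊢
  simp only [bordered, add_apply, sub_apply, smul_apply, InnerProductSpace.rankOne_apply,
    inner_add_left, inner_add_right, inner_sub_left, inner_sub_right, real_inner_smul_left,
    real_inner_smul_right, hA', hB']
  rw [real_inner_comm e v]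
  ring

theorem inner_sq_le_of_apply_eq (hM : (M : V →ₗ[ℝ] V).IsSymmetric) (hM₀ : ∀ v, 0 ≤ ⟪M v, v⟫)
    (hw : M w = e) (v : V) : (2 - ⟪e, w⟫) * ⟪e, v⟫ ^ 2 ≤ ⟪M v, v⟫ := by
  have h := hM₀ (v - ⟪e, v⟫ • w)
  have hvw : ⟪M v, w⟫ = ⟪e, v⟫ := by
    rw [real_inner_comm v e, ← hw]; exact hM v w
  simp only [map_sub, map_smul, hw, inner_sub_left, inner_sub_right, real_inner_smul_left,
    real_inner_smul_right, hvw] at h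
  linarith

theorem isGreatest_pencilBounds (hA : (A : V →ₗ[ℝ] V).IsSymmetric)
    (hB : (B : V →ₗ[ℝ] V).IsSymmetric) (h₀ : ∀ v, 0 ≤ ⟪bordered A B e c v, v⟫)
    (hw : bordered A B e c w = e) (hew : ⟪e, w⟫ = 1) (hBw : 0 < ⟪B w, w⟫) :
    IsGreatest (pencilBounds A B) c := by
  refine ⟨fun v => ?_, fun d hd => ?_⟩
  · have h := inner_sq_le_of_apply_eq (isSymmetric_bordered hA hB e c) h₀ hw v
    rw [hew, inner_bordered_self] at h
    linarith
  · have h := inner_bordered_self (A := A) (B := B) (e := e) (c := c) w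
    rw [hw, hew] at h
    exact le_of_mul_le_mul_right (by linarith [hd w]) hBw

theorem inner_eq_one_of_isGreatest (hA : (A : V →ₗ[ℝ] V).IsSymmetric)
    (hB : (B : V →ₗ[ℝ] V).IsSymmetric) (hc : IsGreatest (pencilBounds A B) c) {κ : ℝ} (hκ : 0 < κ)
    (hco : ∀ v, κ * ‖v‖ ^ 2 ≤ ⟪bordered A B e c v, v⟫) (hw : bordered A B e c w = e) :
    ⟪e, w⟫ = 1 := by
  have h₀ (v : V) : 0 ≤ ⟪bordered A B e c v, v⟫ := (by positivity : 0 ≤ κ * ‖v‖ ^ 2).trans (hco v)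
  have hle : ⟪e, w⟫ ≤ 1 := by
    have hew := hw ▸ h₀ w
    have := inner_bordered_self (A := A) (B := B) (e := e) (c := c) w
    rw [hw] at this
    nlinarith [hc.1 w]
  refine hle.antisymm (le_of_not_gt fun hlt => ?_)
  -- A value below one would leave room for a larger lower bound.
  set ε : ℝ := (1 - ⟪e, w⟫) * κ / ((2 - ⟪e, w⟫) * (‖B‖ + 1))
  have hε : 0 < ε := by
    have : 0 < 1 - ⟪e, w⟫ := by linarith
    have : 0 < 2 - ⟪e, w⟫ := by linarith
    positivity
  have hεmul : (2 - ⟪e, w⟫) * (ε * (‖B‖ + 1)) = (1 - ⟪e, w⟫) * κ := by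
    have : 2 - ⟪e, w⟫ ≠ 0 := by linarith
    simp only [ε]
    field_simp
  refine (lt_add_of_pos_right c hε).not_ge (hc.2 fun v => ?_)
  have hBv : ⟪B v, v⟫ ≤ (‖B‖ + 1) * ‖v‖ ^ 2 := by
    have := (real_inner_le_norm (B v) v).trans
      (mul_le_mul_of_nonneg_right (B.le_opNorm v) (norm_nonneg v))
    nlinarith [sq_nonneg ‖v‖]
  have hM := inner_sq_le_of_apply_eq (isSymmetric_bordered hA hB e c) h₀ hw v
  have key : (2 - ⟪e, w⟫) * (ε * ⟪B v, v⟫) ≤ (2 - ⟪e, w⟫) * (⟪A v, v⟫ - c * ⟪B v, v⟫) :=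
    calc (2 - ⟪e, w⟫) * (ε * ⟪B v, v⟫)
        ≤ (2 - ⟪e, w⟫) * (ε * ((‖B‖ + 1) * ‖v‖ ^ 2)) := by gcongr; linarith
      _ = (1 - ⟪e, w⟫) * (κ * ‖v‖ ^ 2) := by linear_combination ‖v‖ ^ 2 * hεmul
      _ ≤ (1 - ⟪e, w⟫) * ⟪bordered A B e c v, v⟫ := by
        gcongr
        exact hco v
      _ ≤ _ := by rw [inner_bordered_self] at hM ⊢; linarith
  linarith [le_of_mul_le_mul_left key (by linarith)]

theorem coercive_bordered {δ μ : ℝ}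
    (hδ : ∀ v, δ * ‖v‖ ^ 2 ≤ ⟪A v, v⟫ + ⟪B v, v⟫) (hc₀ : 0 ≤ c) (hcμ : c < μ)
    (hgap : ∀ v, μ * ⟪B v, v⟫ ≤ ⟪A v, v⟫ + ⟪e, v⟫ ^ 2) (v : V) :
    (μ - c) / (1 + μ) * δ * ‖v‖ ^ 2 ≤ ⟪bordered A B e c v, v⟫ := by
  have hμ : 0 < 1 + μ := by linarith
  rw [inner_bordered_self, div_mul_eq_mul_div, div_mul_eq_mul_div, div_le_iff₀ hμ]
  calc (μ - c) * δ * ‖v‖ ^ 2 = (μ - c) * (δ * ‖v‖ ^ 2) := by ring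
    _ ≤ (μ - c) * (⟪A v, v⟫ + ⟪B v, v⟫) := by gcongr; exact hδ v
    _ ≤ _ := by nlinarith [hgap v, sq_nonneg ⟪e, v⟫]

theorem inner_apply_self_pos {δ : ℝ} (hB₀ : ∀ v, 0 ≤ ⟪B v, v⟫) (hδ₀ : 0 < δ)
    (hδ : ∀ v, δ * ‖v‖ ^ 2 ≤ ⟪A v, v⟫ + ⟪B v, v⟫) (hw : bordered A B e c w = e)
    (hew : ⟪e, w⟫ = 1) : 0 < ⟪B w, w⟫ := by
  refine (hB₀ w).lt_of_ne' fun hBw => ?_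
  have hAw := inner_bordered_self (A := A) (B := B) (e := e) (c := c) w
  rw [hw, hew, hBw] at hAw
  have hw₀ : w = 0 := by
    have := hδ w
    rw [← norm_eq_zero, ← sq_eq_zero_iff]
    nlinarith [sq_nonneg ‖w‖]
  simp [hw₀] at hew

theorem eventually_nonneg_of_coercive {κ : ℝ} (hκ : 0 < κ) (hM : ∀ v, κ * ‖v‖ ^ 2 ≤ ⟪M v, v⟫) :
    ∀ᶠ T in 𝓝 M, ∀ v, 0 ≤ ⟪T v, v⟫ := by
  filter_upwards [Metric.ball_mem_nhds M hκ] with T hT v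
  rw [Metric.mem_ball', dist_eq_norm] at hT
  have h : ⟪(M - T) v, v⟫ ≤ κ * ‖v‖ ^ 2 :=
    calc ⟪(M - T) v, v⟫ ≤ ‖(M - T) v‖ * ‖v‖ := real_inner_le_norm _ _
      _ ≤ κ * ‖v‖ * ‖v‖ := by gcongr; exact (M - T).le_of_opNorm_le hT.le v
      _ = κ * ‖v‖ ^ 2 := by ring
  rw [sub_apply, inner_sub_left] at h
  linarith [hM v]

theorem apply_ringInverse_apply (hM : IsUnit M) (v : V) : M (Ring.inverse M v) = v :=
  congrArg (fun T : V →L[ℝ] V => T v) (Ring.mul_inverse_cancel M hM)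

theorem tendsto_bordered {ι : Type*} {f : Filter ι} {A' B' : ι → V →L[ℝ] V} {c' : ι → ℝ}
    (hA : Tendsto A' f (𝓝 A)) (hB : Tendsto B' f (𝓝 B)) (hc : Tendsto c' f (𝓝 c)) (e : V) :
    Tendsto (fun i => bordered (A' i) (B' i) e (c' i)) f (𝓝 (bordered A B e c)) :=
  (hA.sub (hc.smul hB)).add_const _

variable [CompleteSpace V]

theorem isUnit_of_coercive {κ : ℝ} (hκ : 0 < κ) (hM : ∀ v, κ * ‖v‖ ^ 2 ≤ ⟪M v, v⟫) : IsUnit M :=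
  M.isUnit_of_forall_le_norm_inner_map (c := ⟨κ, hκ.le⟩) hκ fun v => by
    rw [mul_comm]
    exact (hM v).trans (le_abs_self _)

theorem hasDerivAt_inner_ringInverse_bordered (hA : (A : V →ₗ[ℝ] V).IsSymmetric)
    (hB : (B : V →ₗ[ℝ] V).IsSymmetric) (hM : IsUnit (bordered A B e c))
    (hw : Ring.inverse (bordered A B e c) e = w) :
    HasDerivAt (fun t => ⟪e, Ring.inverse (bordered A B e t) e⟫) ⟪B w, w⟫ c := by
  have hpencil : HasDerivAt (bordered A B e) (-((1 : ℝ) • B)) c :=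
    (((hasDerivAt_id c).smul_const B).const_sub A).add_const (InnerProductSpace.rankOne ℝ e e)
  have hMw : bordered A B e c w = e := hw ▸ apply_ringInverse_apply hM e
  have hcancel := apply_ringInverse_apply hM (B w)
  have hsymm := isSymmetric_bordered hA hB e c w (Ring.inverse (bordered A B e c) (B w))
  simp only [ContinuousLinearMap.coe_coe, hMw, hcancel] at hsymm
  obtain ⟨x, hx⟩ := hM
  have hinv := hasFDerivAt_ringInverse (𝕜 := ℝ) x
  rw [← Ring.inverse_unit, hx] at hinv
  have hderiv := (hasDerivAt_const c e).inner ℝ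
    ((hinv.comp_hasDerivAt c hpencil).clm_apply (hasDerivAt_const c e))
  simpa [hw, hsymm, real_inner_comm w] using hderiv

theorem contDiffAt_ringInverse_bordered {A B : ℝ → V →L[ℝ] V} {q : ℝ × ℝ}
    (hA : AnalyticAt ℝ A q.1) (hB : AnalyticAt ℝ B q.1)
    (hM : IsUnit (bordered (A q.1) (B q.1) e q.2)) :
    ContDiffAt ℝ ω (fun p : ℝ × ℝ => Ring.inverse (bordered (A p.1) (B p.1) e p.2) e) q := by
  have hA' : ContDiffAt ℝ ω (fun p : ℝ × ℝ => A p.1) q := hA.contDiffAt.comp q contDiffAt_fst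
  have hB' : ContDiffAt ℝ ω (fun p : ℝ × ℝ => B p.1) q := hB.contDiffAt.comp q contDiffAt_fst
  obtain ⟨x, hx⟩ := hM
  have hinv := (analyticAt_inverse (𝕜 := ℝ) x).contDiffAt (n := ω)
  rw [hx] at hinv
  exact (hinv.comp q ((hA'.sub (contDiffAt_snd.smul hB')).add contDiffAt_const)).clm_apply
    contDiffAt_const

theorem exists_analyticAt_implicit {F : ℝ × ℝ → ℝ} {q : ℝ × ℝ} {d : ℝ}
    (hF : ContDiffAt ℝ ω F q) (hd : HasDerivAt (fun t => F (q.1, t)) d q.2) (hd₀ : d ≠ 0) :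
    ∃ m : ℝ → ℝ, m q.1 = q.2 ∧ AnalyticAt ℝ m q.1 ∧ ∀ᶠ s in 𝓝 q.1, F (s, m s) = F q := by
  have hpartial : fderiv ℝ F q (0, 1) = d :=
    ((hF.differentiableAt (by simp)).hasFDerivAt.comp_hasDerivAt q.2
      ((hasDerivAt_const q.2 q.1).prodMk (hasDerivAt_id q.2))).unique hd
  have hinv : (fderiv ℝ F q ∘L .inr ℝ ℝ ℝ).IsInvertible :=
    ⟨ContinuousLinearEquiv.unitsEquivAut ℝ (Units.mk0 d hd₀), by ext; simp [hpartial]⟩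
  exact ⟨hF.implicitFunction (by simp) hinv, hF.implicitFunction_apply_self (by simp) hinv,
    (hF.contDiffAt_implicitFunction (by simp) hinv).analyticAt,
    hF.eventually_apply_implicitFunction (by simp) hinv⟩

theorem exists_analyticAt_isGreatest {A B : ℝ → V →L[ℝ] V} {s₀ c κ : ℝ}
    (hA : AnalyticAt ℝ A s₀) (hB : AnalyticAt ℝ B s₀)
    (hAs : ∀ s, (A s : V →ₗ[ℝ] V).IsSymmetric) (hBs : ∀ s, (B s : V →ₗ[ℝ] V).IsSymmetric)
    (hκ : 0 < κ) (hco : ∀ v, κ * ‖v‖ ^ 2 ≤ ⟪bordered (A s₀) (B s₀) e c v, v⟫)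
    (hw : bordered (A s₀) (B s₀) e c w = e) (hew : ⟪e, w⟫ = 1) (hBw : 0 < ⟪B s₀ w, w⟫) :
    ∃ m : ℝ → ℝ, AnalyticAt ℝ m s₀ ∧
      ∀ᶠ s in 𝓝 s₀, IsGreatest (pencilBounds (A s) (B s)) (m s) := by
  have hM := isUnit_of_coercive hκ hco
  have hw' : Ring.inverse (bordered (A s₀) (B s₀) e c) e = w := by
    have h : Ring.inverse (bordered (A s₀) (B s₀) e c) (bordered (A s₀) (B s₀) e c w) = w :=
      congrArg (fun T : V →L[ℝ] V => T w) (Ring.inverse_mul_cancel _ hM)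
    rwa [hw] at h
  set W : ℝ × ℝ → V := fun p => Ring.inverse (bordered (A p.1) (B p.1) e p.2) e
  have hW : ContDiffAt ℝ ω W (s₀, c) := contDiffAt_ringInverse_bordered hA hB hM
  have hF : ContDiffAt ℝ ω (fun p => ⟪e, W p⟫) (s₀, c) := contDiffAt_const.inner ℝ hW
  have hFd : HasDerivAt (fun t => ⟪e, W (s₀, t)⟫) ⟪B s₀ w, w⟫ c :=
    hasDerivAt_inner_ringInverse_bordered (A := A s₀) (B := B s₀) (hAs s₀) (hBs s₀) hM hw'
  obtain ⟨m, hm₀, hm, hFm⟩ := exists_analyticAt_implicit hF hFd hBw.ne'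
  have hpath : Tendsto (fun s => (s, m s)) (𝓝 s₀) (𝓝 (s₀, c)) := by
    conv_rhs => rw [← show m s₀ = c from hm₀]
    exact tendsto_id.prodMk_nhds hm.continuousAt.tendsto
  have hbordered := tendsto_bordered hA.continuousAt.tendsto hB.continuousAt.tendsto
    hpath.snd_nhds e
  have hWm : Tendsto (fun s => W (s, m s)) (𝓝 s₀) (𝓝 w) :=
    hw' ▸ hW.continuousAt.tendsto.comp hpath
  have hBWm : Tendsto (fun s => ⟪B s (W (s, m s)), W (s, m s)⟫) (𝓝 s₀) (𝓝 ⟪B s₀ w, w⟫) :=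
    ((isBoundedBilinearMap_apply.continuous.tendsto (B s₀, w)).comp
      (hB.continuousAt.tendsto.prodMk_nhds hWm)).inner hWm
  refine ⟨m, hm, ?_⟩
  filter_upwards [hFm, hbordered.eventually (eventually_nonneg_of_coercive hκ hco),
    hbordered.eventually (Units.isOpen.mem_nhds hM), hBWm.eventually (lt_mem_nhds hBw)]
    with s hF hnonneg hunit hpos
  exact isGreatest_pencilBounds (hAs s) (hBs s) hnonneg (apply_ringInverse_apply hunit e)
    (hF.trans (congrArg (⟪e, ·⟫) hw' |>.trans hew)) hpos

theorem analyticAt_of_isGreatest_pencilBounds {A B : ℝ → V →L[ℝ] V} {l : ℝ → ℝ} {s₀ δ μ : ℝ}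
    (hA : AnalyticAt ℝ A s₀) (hB : AnalyticAt ℝ B s₀)
    (hAs : ∀ s, (A s : V →ₗ[ℝ] V).IsSymmetric) (hBs : ∀ s, (B s : V →ₗ[ℝ] V).IsSymmetric)
    (hl : ∀ᶠ s in 𝓝 s₀, IsGreatest (pencilBounds (A s) (B s)) (l s))
    (hA₀ : ∀ v, 0 ≤ ⟪A s₀ v, v⟫) (hB₀ : ∀ v, 0 ≤ ⟪B s₀ v, v⟫) (hδ₀ : 0 < δ)
    (hδ : ∀ v, δ * ‖v‖ ^ 2 ≤ ⟪A s₀ v, v⟫ + ⟪B s₀ v, v⟫) (hlμ : l s₀ < μ)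
    (hgap : ∀ v, μ * ⟪B s₀ v, v⟫ ≤ ⟪A s₀ v, v⟫ + ⟪e, v⟫ ^ 2) :
    AnalyticAt ℝ l s₀ := by
  have hl₀ := hl.self_of_nhds
  have hl_nonneg : 0 ≤ l s₀ := hl₀.2 fun v => by simpa using hA₀ v
  have hκ : 0 < (μ - l s₀) / (1 + μ) * δ := by
    have : 0 < μ - l s₀ := sub_pos.2 hlμ
    have : 0 < 1 + μ := by linarith
    positivity
  have hco := coercive_bordered hδ hl_nonneg hlμ hgap
  have hw := apply_ringInverse_apply (isUnit_of_coercive hκ hco) e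
  have hew := inner_eq_one_of_isGreatest (hAs s₀) (hBs s₀) hl₀ hκ hco hw
  obtain ⟨m, hm, hmg⟩ := exists_analyticAt_isGreatest hA hB hAs hBs hκ hco hw hew
    (inner_apply_self_pos hB₀ hδ₀ hδ hw hew)
  refine hm.congr ?_
  filter_upwards [hl, hmg] with s hls hms using hms.unique hls

end Pencil

/-! ### Sharp Poincaré inequalities -/

section Poincare

theorem sq_mul_integral_sq_le_of_mul_lt_pi {f : ℝ → ℝ} {a b c : ℝ} (hf : ContDiff ℝ 1 f)
    (hab : a ≤ b) (ha : f a = 0) (hb : f b = 0) (hc₀ : 0 ≤ c) (hc : c * (b - a) < π) :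
    c ^ 2 * ∫ x in a..b, f x ^ 2 ≤ ∫ x in a..b, deriv f x ^ 2 := by
  have hf' : Continuous (deriv f) := hf.continuous_deriv le_rfl
  set θ : ℝ → ℝ := fun x => c * (x - (a + b) / 2)
  have hcos (x : ℝ) (hx : x ∈ Icc a b) : cos (θ x) ≠ 0 := by
    refine (cos_pos_of_mem_Ioo ⟨?_, ?_⟩).ne'
    · change -(π / 2) < c * (x - (a + b) / 2)
      nlinarith [hx.1]
    · change c * (x - (a + b) / 2) < π / 2
      nlinarith [hx.2]
  -- Picone's identity with `h = c tan θ`, which satisfies the Riccati equation `h' = c² + h²`.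
  set h : ℝ → ℝ := fun x => c * tan (θ x)
  have hh (x : ℝ) (hx : x ∈ Icc a b) : HasDerivAt h (c ^ 2 + h x ^ 2) x := by
    have hθ : HasDerivAt θ (c * 1) x := ((hasDerivAt_id x).sub_const _).const_mul c
    refine (((hasDerivAt_tan (hcos x hx)).comp x hθ).const_mul c).congr_deriv ?_
    have := hcos x hx
    simp only [h, tan_eq_sin_div_cos]
    field_simp
    rw [cos_sq_add_sin_sq, mul_one]
  have hg (x : ℝ) (hx : x ∈ Icc a b) : HasDerivAt (fun x => -(h x * f x ^ 2))
      (-((c ^ 2 + h x ^ 2) * f x ^ 2 + h x * (2 * f x * deriv f x))) x := by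
    have hfx := (hf.differentiable one_ne_zero x).hasDerivAt
    refine ((hh x hx).mul (hfx.pow 2)).neg.congr_deriv ?_
    simp
  have hint := intervalIntegral.sub_le_integral_of_hasDeriv_right_of_le hab
    (fun x hx => (hg x hx).continuousAt.continuousWithinAt)
    (fun x hx => (hg x (Ioo_subset_Icc_self hx)).hasDerivWithinAt)
    (φ := fun x => deriv f x ^ 2 - c ^ 2 * f x ^ 2)
    (Continuous.integrableOn_Icc (by fun_prop))
    (fun x _ => by
      nlinarith [sq_nonneg (deriv f x + h x * f x)])
  rw [← intervalIntegral.integral_const_mul, ← sub_nonneg, ← intervalIntegral.integral_sub]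
  · simpa [ha, hb] using hint
  · exact (hf'.pow 2).intervalIntegrable _ _
  · exact ((hf.continuous.pow 2).const_mul (c ^ 2)).intervalIntegrable _ _

theorem integral_sq_le_of_eq_zero {f : ℝ → ℝ} {a b : ℝ} (hf : ContDiff ℝ 1 f) (hab : a < b)
    (ha : f a = 0) (hb : f b = 0) :
    (π / (b - a)) ^ 2 * ∫ x in a..b, f x ^ 2 ≤ ∫ x in a..b, deriv f x ^ 2 := by
  have hba : 0 < b - a := sub_pos.2 hab
  have hlim : Tendsto (fun c : ℝ => c ^ 2 * ∫ x in a..b, f x ^ 2) (𝓝[<] (π / (b - a)))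
      (𝓝 ((π / (b - a)) ^ 2 * ∫ x in a..b, f x ^ 2)) :=
    tendsto_nhdsWithin_of_tendsto_nhds (Continuous.tendsto (by fun_prop) _)
  refine le_of_tendsto hlim ?_
  filter_upwards [Ioo_mem_nhdsLT (div_pos pi_pos hba)] with c hc
  exact sq_mul_integral_sq_le_of_mul_lt_pi hf hab.le ha hb hc.1.le ((lt_div_iff₀ hba).1 hc.2)

theorem integral_sub_average_sq {f : ℝ → ℝ} (hf : Continuous f) {a b : ℝ} (hab : a ≠ b) :
    ∫ x in a..b, (f x - (∫ t in a..b, f t) / (b - a)) ^ 2 =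
      (∫ x in a..b, f x ^ 2) - (∫ x in a..b, f x) ^ 2 / (b - a) := by
  have hba : b - a ≠ 0 := sub_ne_zero.2 hab.symm
  set m := (∫ t in a..b, f t) / (b - a) with hm
  have hexp (x : ℝ) : (f x - m) ^ 2 = f x ^ 2 - 2 * m * f x + m ^ 2 := by ring
  have hm' : ∫ x in a..b, f x = m * (b - a) := by rw [hm, div_mul_cancel₀ _ hba]
  simp only [hexp]
  rw [intervalIntegral.integral_add, intervalIntegral.integral_sub,
    intervalIntegral.integral_const_mul, intervalIntegral.integral_const, smul_eq_mul, hm']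
  · field_simp
    ring
  all_goals exact Continuous.intervalIntegrable (by fun_prop) _ _

theorem sq_integral_div_le {f : ℝ → ℝ} (hf : Continuous f) {a b : ℝ} (hab : a < b) :
    (∫ x in a..b, f x) ^ 2 / (b - a) ≤ ∫ x in a..b, f x ^ 2 := by
  rw [← sub_nonneg, ← integral_sub_average_sq hf hab.ne]
  exact intervalIntegral.integral_nonneg hab.le fun x _ => sq_nonneg _

theorem integral_sq_le_of_integral_eq_zero {f : ℝ → ℝ} {a b : ℝ} (hf : ContDiff ℝ 1 f)
    (hab : a < b) (h₀ : ∫ x in a..b, f x = 0) :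
    (π / (b - a)) ^ 2 * ∫ x in a..b, f x ^ 2 ≤ ∫ x in a..b, deriv f x ^ 2 := by
  set κ := (π / (b - a)) ^ 2
  have hf' : Continuous (deriv f) := hf.continuous_deriv le_rfl
  -- The primitive of `f` vanishes at both ends.
  set F : ℝ → ℝ := fun x => ∫ t in a..x, f t
  have hF (x : ℝ) : HasDerivAt F (f x) x :=
    (hf.continuous.integral_hasStrictDerivAt a x).hasDerivAt
  have hdF : deriv F = f := funext fun x => (hF x).deriv
  have hFc : ContDiff ℝ 1 F :=
    contDiff_one_iff_deriv.2 ⟨fun x => (hF x).differentiableAt, hdF ▸ hf.continuous⟩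
  have hdir : κ * ∫ x in a..b, F x ^ 2 ≤ ∫ x in a..b, f x ^ 2 := by
    simpa only [hdF] using integral_sq_le_of_eq_zero hFc hab intervalIntegral.integral_same h₀
  have hparts : ∫ x in a..b, F x * deriv f x = -∫ x in a..b, f x ^ 2 := by
    rw [intervalIntegral.integral_mul_deriv_eq_deriv_mul (fun x _ => hF x)
      (fun x _ => (hf.differentiable one_ne_zero x).hasDerivAt)
      (hf.continuous.intervalIntegrable _ _) (hf'.intervalIntegrable _ _)]
    simp [F, h₀, sq]
  have hsq : ∫ x in a..b, (deriv f x + κ * F x) ^ 2 = (∫ x in a..b, deriv f x ^ 2) +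
      2 * κ * (∫ x in a..b, F x * deriv f x) + κ ^ 2 * ∫ x in a..b, F x ^ 2 := by
    have hexp (x : ℝ) : (deriv f x + κ * F x) ^ 2 =
        deriv f x ^ 2 + 2 * κ * (F x * deriv f x) + κ ^ 2 * F x ^ 2 := by ring
    have := hFc.continuous
    simp only [hexp]
    rw [intervalIntegral.integral_add, intervalIntegral.integral_add,
      intervalIntegral.integral_const_mul, intervalIntegral.integral_const_mul]
    all_goals exact Continuous.intervalIntegrable (by fun_prop) _ _
  have hnonneg : 0 ≤ ∫ x in a..b, (deriv f x + κ * F x) ^ 2 :=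
    intervalIntegral.integral_nonneg hab.le fun x _ => sq_nonneg _
  nlinarith [mul_le_mul_of_nonneg_left hdir (sq_nonneg (π / (b - a)))]

theorem poincare_interval {f : ℝ → ℝ} {a b : ℝ} (hf : ContDiff ℝ 1 f) (hab : a < b) :
    (π / (b - a)) ^ 2 * ((∫ x in a..b, f x ^ 2) - (∫ x in a..b, f x) ^ 2 / (b - a)) ≤
      ∫ x in a..b, deriv f x ^ 2 := by
  set m := (∫ t in a..b, f t) / (b - a)
  have hmean : ∫ x in a..b, (f x - m) = 0 := by
    have hba : b - a ≠ 0 := (sub_pos.2 hab).ne'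
    rw [intervalIntegral.integral_sub (hf.continuous.intervalIntegrable _ _) (by simp),
      intervalIntegral.integral_const, smul_eq_mul, mul_div_cancel₀ _ hba, sub_self]
  have h := integral_sq_le_of_integral_eq_zero (hf.sub contDiff_const) hab hmean
  simpa only [integral_sub_average_sq hf.continuous hab.ne, deriv_sub_const, m] using h

theorem continuous_integral_left {f : ℝ × ℝ → ℝ} (hf : Continuous f) (a b : ℝ) :
    Continuous fun y => ∫ x in a..b, f (x, y) :=
  intervalIntegral.continuous_parametric_intervalIntegral_of_continuous' (by fun_prop) a b

theorem continuous_integral_right {f : ℝ × ℝ → ℝ} (hf : Continuous f) (a b : ℝ) :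
    Continuous fun x => ∫ y in a..b, f (x, y) :=
  intervalIntegral.continuous_parametric_intervalIntegral_of_continuous' (by fun_prop) a b

theorem integral_integral_comm {f : ℝ × ℝ → ℝ} (hf : Continuous f) (a b c d : ℝ) :
    ∫ y in c..d, ∫ x in a..b, f (x, y) = ∫ x in a..b, ∫ y in c..d, f (x, y) :=
  intervalIntegral_intervalIntegral_swap <|
    ((by fun_prop : Continuous fun p : ℝ × ℝ => f p.swap).continuousOn.integrableOn_compact
      (isCompact_uIcc.prod isCompact_uIcc)).mono_set
      (prod_mono uIoc_subset_uIcc uIoc_subset_uIcc)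

theorem integral_integral_mono {f g : ℝ × ℝ → ℝ} (hf : Continuous f) (hg : Continuous g)
    (hfg : ∀ p, f p ≤ g p) {a b c d : ℝ} (hab : a ≤ b) (hcd : c ≤ d) :
    ∫ x in a..b, ∫ y in c..d, f (x, y) ≤ ∫ x in a..b, ∫ y in c..d, g (x, y) := by
  refine intervalIntegral.integral_mono_on hab
    ((continuous_integral_right hf c d).intervalIntegrable _ _)
    ((continuous_integral_right hg c d).intervalIntegrable _ _) fun x _ => ?_
  exact intervalIntegral.integral_mono_on hcd (Continuous.intervalIntegrable (by fun_prop) _ _)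
    (Continuous.intervalIntegrable (by fun_prop) _ _) fun y _ => hfg _

theorem sq_integral_add_sq_integral_le {f : ℝ × ℝ → ℝ} (hf : Continuous f) {a b c d : ℝ}
    (hab : a < b) (hcd : c < d) :
    (∫ y in c..d, (∫ x in a..b, f (x, y)) ^ 2 / (b - a)) +
        (∫ x in a..b, (∫ y in c..d, f (x, y)) ^ 2 / (d - c)) ≤
      (∫ x in a..b, ∫ y in c..d, f (x, y) ^ 2) +
        (∫ x in a..b, ∫ y in c..d, f (x, y)) ^ 2 / ((b - a) * (d - c)) := by
  have hba : 0 < b - a := sub_pos.2 hab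
  have hdc : 0 < d - c := sub_pos.2 hcd
  set n : ℝ → ℝ := fun x => (∫ y in c..d, f (x, y)) / (d - c) with hn
  set m : ℝ → ℝ := fun y => ∫ x in a..b, f (x, y) with hm
  have hnc : Continuous n := (continuous_integral_right hf c d).div_const _
  have hmc : Continuous m := continuous_integral_left hf a b
  have hf₂ : Continuous fun p : ℝ × ℝ => (f p - n p.1) ^ 2 := by fun_prop
  have hI : ∫ x in a..b, n x = (∫ y in c..d, m y) / (d - c) := by
    rw [intervalIntegral.integral_div, hm, integral_integral_comm hf]
  have hmn (y : ℝ) : ∫ x in a..b, (f (x, y) - n x) = m y - (∫ y in c..d, m y) / (d - c) := by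
    rw [intervalIntegral.integral_sub, hI]
    all_goals exact Continuous.intervalIntegrable (by fun_prop) _ _
  -- Jensen's inequality in `x` for `f - n`, integrated in `y`
  have hjensen : ∫ y in c..d, (m y - (∫ y in c..d, m y) / (d - c)) ^ 2 / (b - a) ≤
      ∫ y in c..d, ∫ x in a..b, (f (x, y) - n x) ^ 2 := by
    refine intervalIntegral.integral_mono_on hcd.le
      (Continuous.intervalIntegrable (by fun_prop) _ _)
      ((continuous_integral_left hf₂ a b).intervalIntegrable _ _) fun y _ => ?_
    rw [← hmn]
    exact sq_integral_div_le (by fun_prop) hab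
  have hvar (x : ℝ) : ∫ y in c..d, (f (x, y) - n x) ^ 2 =
      (∫ y in c..d, f (x, y) ^ 2) - (∫ y in c..d, f (x, y)) ^ 2 / (d - c) :=
    integral_sub_average_sq (by fun_prop) hcd.ne
  have hf₃ := continuous_integral_right hf c d
  have hf₄ := continuous_integral_right (hf.pow 2) c d
  rw [integral_integral_comm hf₂, intervalIntegral.integral_div, integral_sub_average_sq hmc hcd.ne]
    at hjensen
  simp only [hvar] at hjensen
  rw [intervalIntegral.integral_sub, integral_integral_comm hf, sub_div, div_div,
    mul_comm (d - c) (b - a)] at hjensen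
  · rw [intervalIntegral.integral_div]
    linarith
  all_goals exact Continuous.intervalIntegrable (by fun_prop) _ _

theorem continuous_fderiv_apply_const {u : ℝ × ℝ → ℝ} (hu : ContDiff ℝ 1 u) (v : ℝ × ℝ) :
    Continuous fun p => fderiv ℝ u p v :=
  (hu.continuous_fderiv one_ne_zero).clm_apply continuous_const

theorem continuous_gradSq2 {u : ℝ × ℝ → ℝ} (hu : ContDiff ℝ 1 u) : Continuous (gradSq2 u) :=
  ((continuous_fderiv_apply_const hu _).pow 2).add ((continuous_fderiv_apply_const hu _).pow 2)

theorem hasDerivAt_fst {u : ℝ × ℝ → ℝ} {x y : ℝ} (hu : DifferentiableAt ℝ u (x, y)) :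
    HasDerivAt (fun t => u (t, y)) (fderiv ℝ u (x, y) (1, 0)) x :=
  hu.hasFDerivAt.comp_hasDerivAt x ((hasDerivAt_id x).prodMk (hasDerivAt_const x y))

theorem hasDerivAt_snd {u : ℝ × ℝ → ℝ} {x y : ℝ} (hu : DifferentiableAt ℝ u (x, y)) :
    HasDerivAt (fun t => u (x, t)) (fderiv ℝ u (x, y) (0, 1)) y :=
  hu.hasFDerivAt.comp_hasDerivAt y ((hasDerivAt_const y x).prodMk (hasDerivAt_id y))

theorem integral_integral_gradSq2 {u : ℝ × ℝ → ℝ} (hu : ContDiff ℝ 1 u) (a b c d : ℝ) :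
    ∫ x in a..b, ∫ y in c..d, gradSq2 u (x, y) =
      (∫ x in a..b, ∫ y in c..d, fderiv ℝ u (x, y) (1, 0) ^ 2) +
        ∫ x in a..b, ∫ y in c..d, fderiv ℝ u (x, y) (0, 1) ^ 2 := by
  have h₁ : Continuous fun p => fderiv ℝ u p (1, 0) ^ 2 :=
    (continuous_fderiv_apply_const hu (1, 0)).pow 2
  have h₂ : Continuous fun p => fderiv ℝ u p (0, 1) ^ 2 :=
    (continuous_fderiv_apply_const hu (0, 1)).pow 2
  rw [← intervalIntegral.integral_add
    ((continuous_integral_right h₁ c d).intervalIntegrable _ _)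
    ((continuous_integral_right h₂ c d).intervalIntegrable _ _)]
  refine intervalIntegral.integral_congr fun x _ => intervalIntegral.integral_add ?_ ?_ <;>
    exact Continuous.intervalIntegrable (by fun_prop) _ _

theorem poincare_interval_of_sub_le {f : ℝ → ℝ} {a b L : ℝ} (hf : ContDiff ℝ 1 f) (hab : a < b)
    (hL : b - a ≤ L) :
    (π / L) ^ 2 * ((∫ x in a..b, f x ^ 2) - (∫ x in a..b, f x) ^ 2 / (b - a)) ≤
      ∫ x in a..b, deriv f x ^ 2 := by
  have hba := sub_pos.2 hab
  have hL₀ := hba.trans_le hL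
  refine (mul_le_mul_of_nonneg_right ?_ ?_).trans (poincare_interval hf hab)
  · gcongr
  · exact sub_nonneg.2 (sq_integral_div_le hf.continuous hab)

theorem integral_poincare_interval {f f' : ℝ × ℝ → ℝ} (hf : Continuous f) (hf' : Continuous f')
    (h : ∀ x y, HasDerivAt (fun t => f (t, y)) (f' (x, y)) x) {a b c d L : ℝ} (hab : a < b)
    (hcd : c ≤ d) (hL : b - a ≤ L) :
    (π / L) ^ 2 * ((∫ y in c..d, ∫ x in a..b, f (x, y) ^ 2) -
        ∫ y in c..d, (∫ x in a..b, f (x, y)) ^ 2 / (b - a)) ≤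
      ∫ y in c..d, ∫ x in a..b, f' (x, y) ^ 2 := by
  have h₁ := continuous_integral_left hf a b
  have h₂ := continuous_integral_left (f := fun p => f p ^ 2) (by fun_prop) a b
  have h₃ := continuous_integral_left (f := fun p => f' p ^ 2) (by fun_prop) a b
  rw [← intervalIntegral.integral_sub (h₂.intervalIntegrable _ _)
    (Continuous.intervalIntegrable (by fun_prop) _ _), ← intervalIntegral.integral_const_mul]
  refine intervalIntegral.integral_mono_on hcd (Continuous.intervalIntegrable (by fun_prop) _ _)
    (h₃.intervalIntegrable _ _) fun y _ => ?_
  have hderiv : deriv (fun t => f (t, y)) = fun x => f' (x, y) := funext fun x => (h x y).deriv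
  have hsmooth : ContDiff ℝ 1 fun t => f (t, y) :=
    contDiff_one_iff_deriv.2 ⟨fun x => (h x y).differentiableAt, by rw [hderiv]; fun_prop⟩
  simpa only [hderiv] using poincare_interval_of_sub_le hsmooth hab hL

theorem integral_dirichlet_interval {f f' : ℝ × ℝ → ℝ} (hf : Continuous f) (hf' : Continuous f')
    (h : ∀ x y, HasDerivAt (fun t => f (t, y)) (f' (x, y)) x) {a b c d : ℝ} (hab : a < b)
    (hcd : c ≤ d) (ha : ∀ y ∈ Ioo c d, f (a, y) = 0) (hb : ∀ y ∈ Ioo c d, f (b, y) = 0) :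
    (π / (b - a)) ^ 2 * (∫ y in c..d, ∫ x in a..b, f (x, y) ^ 2) ≤
      ∫ y in c..d, ∫ x in a..b, f' (x, y) ^ 2 := by
  have h₁ := continuous_integral_left (f := fun p => f p ^ 2) (by fun_prop) a b
  have h₂ := continuous_integral_left (f := fun p => f' p ^ 2) (by fun_prop) a b
  rw [← intervalIntegral.integral_const_mul]
  refine intervalIntegral.integral_mono_on_of_le_Ioo hcd
    (Continuous.intervalIntegrable (by fun_prop) _ _) (h₂.intervalIntegrable _ _) fun y hy => ?_
  have hderiv : deriv (fun t => f (t, y)) = fun x => f' (x, y) := funext fun x => (h x y).deriv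
  have hsmooth : ContDiff ℝ 1 fun t => f (t, y) :=
    contDiff_one_iff_deriv.2 ⟨fun x => (h x y).differentiableAt, by rw [hderiv]; fun_prop⟩
  simpa only [hderiv] using integral_sq_le_of_eq_zero hsmooth hab (ha y hy) (hb y hy)

theorem poincare_rectangle {u : ℝ × ℝ → ℝ} (hu : ContDiff ℝ 1 u) {a b c d L : ℝ}
    (hab : a < b) (hcd : c < d) (habL : b - a ≤ L) (hcdL : d - c ≤ L) :
    (π / L) ^ 2 * ((∫ x in a..b, ∫ y in c..d, u (x, y) ^ 2) -
        (∫ x in a..b, ∫ y in c..d, u (x, y)) ^ 2 / ((b - a) * (d - c))) ≤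
      ∫ x in a..b, ∫ y in c..d, gradSq2 u (x, y) := by
  have huc := hu.continuous
  have hfst := integral_poincare_interval huc (continuous_fderiv_apply_const hu (1, 0))
    (fun x y => hasDerivAt_fst (hu.differentiable one_ne_zero _)) hab hcd.le habL
  have hsnd := integral_poincare_interval (huc.comp continuous_swap)
    ((continuous_fderiv_apply_const hu (0, 1)).comp continuous_swap)
    (fun x y => hasDerivAt_snd (hu.differentiable one_ne_zero _)) hcd hab.le hcdL
  have hmean := mul_le_mul_of_nonneg_left (sq_integral_add_sq_integral_le huc hab hcd)
    (sq_nonneg (π / L))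
  have hfst' := continuous_fderiv_apply_const hu (1, 0)
  rw [integral_integral_comm (f := fun p => u p ^ 2) (by fun_prop),
    integral_integral_comm (f := fun p => fderiv ℝ u p (1, 0) ^ 2) (by fun_prop)] at hfst
  simp only [Function.comp_apply, Prod.swap_prod_mk] at hsnd
  rw [integral_integral_gradSq2 hu]
  linarith

end Poincare

/-! ### The finite guide -/

section Guide

variable {R : ℝ}

theorem GamR_eq_union (hR : 0 < R) :
    GamR R = Ioo (-1) 0 ×ˢ Ioo (-1) R ∪ Ioo (-1) R ×ˢ Ioo (-1) 0 := by
  ext p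
  simp only [GamR, Gam, Box, mem_inter_iff, mem_ofPred_eq, lt_min_iff, min_lt_iff, abs_lt,
    mem_union, mem_prod, mem_Ioo]
  grind

theorem isOpen_GamR (hR : 0 < R) : IsOpen (GamR R) := by
  rw [GamR_eq_union hR]
  exact (isOpen_Ioo.prod isOpen_Ioo).union (isOpen_Ioo.prod isOpen_Ioo)

theorem closure_GamR (hR : 0 < R) :
    closure (GamR R) = Icc (-1) 0 ×ˢ Icc (-1) R ∪ Icc (-1) R ×ˢ Icc (-1) 0 := by
  rw [GamR_eq_union hR, closure_union, closure_prod_eq, closure_prod_eq,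
    closure_Ioo (by norm_num), closure_Ioo (by linarith)]

theorem Box_eq_prod (L : ℝ) : Box L = Ioo (-1 - L) (-1 + L) ×ˢ Ioo (-1 - L) (-1 + L) := by
  ext p
  simp only [Box, mem_ofPred_eq, abs_lt, mem_prod, mem_Ioo]
  grind

theorem frontier_Box {L : ℝ} (hL : 0 < L) :
    frontier (Box L) = (Icc (-1 - L) (-1 + L) ×ˢ Icc (-1 - L) (-1 + L)) \ Box L := by
  have hne : -1 - L ≠ -1 + L := by linarith
  rw [Box_eq_prod, (isOpen_Ioo.prod isOpen_Ioo).frontier_eq, closure_prod_eq, closure_Ioo hne]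

theorem mem_DirB_iff (hR : 0 < R) {p : ℝ × ℝ} :
    p ∈ DirB R ↔ (-1 ≤ p.1 ∧ p.1 < R) ∧ (-1 ≤ p.2 ∧ p.2 < R) ∧ (p.1 ≤ 0 ∨ p.2 ≤ 0) ∧
      (p.1 = -1 ∨ p.2 = -1 ∨ 0 ≤ p.1 ∧ 0 ≤ p.2) := by
  rw [DirB, Sig, frontier_Box (by linarith), (isOpen_GamR hR).frontier_eq, closure_GamR hR,
    GamR_eq_union hR, Box_eq_prod]
  simp only [Set.mem_sdiff, mem_inter_iff, mem_union, mem_prod, mem_Icc, mem_Ioo]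
  grind (splits := 20)

theorem setIntegral_Ioc_prod_Ioc {f : ℝ × ℝ → ℝ} (hf : Continuous f) {a b c d : ℝ}
    (hab : a ≤ b) (hcd : c ≤ d) :
    ∫ p in Ioc a b ×ˢ Ioc c d, f p = ∫ x in a..b, ∫ y in c..d, f (x, y) := by
  have hint : IntegrableOn f (Ioc a b ×ˢ Ioc c d) :=
    (hf.continuousOn.integrableOn_compact (isCompact_Icc.prod isCompact_Icc)).mono_set
      (prod_mono Ioc_subset_Icc_self Ioc_subset_Icc_self)
  rw [Measure.volume_eq_prod, setIntegral_prod _ hint, intervalIntegral.integral_of_le hab]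
  simp only [intervalIntegral.integral_of_le hcd]

theorem GamR_ae_eq (hR : 0 < R) : GamR R =ᵐ[volume] (Ioc (-1) 0 ×ˢ Ioc (-1) R ∪
    Ioc 0 R ×ˢ Ioc (-1) 0 : Set (ℝ × ℝ)) := by
  have hfst (x : ℝ) : ∀ᵐ p : ℝ × ℝ, p.1 ≠ x :=
    Measure.quasiMeasurePreserving_fst.ae (Measure.ae_ne volume x)
  have hsnd (x : ℝ) : ∀ᵐ p : ℝ × ℝ, p.2 ≠ x :=
    Measure.quasiMeasurePreserving_snd.ae (Measure.ae_ne volume x)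
  rw [Filter.eventuallyEq_set, GamR_eq_union hR]
  filter_upwards [hfst 0, hfst R, hsnd 0, hsnd R] with p h₁ h₂ h₃ h₄
  simp only [mem_union, mem_prod, mem_Ioc, mem_Ioo]
  grind

theorem integrableOn_GamR {f : ℝ × ℝ → ℝ} (hf : Continuous f) (hR : 0 < R) :
    IntegrableOn f (GamR R) := by
  have hcpt : IsCompact (closure (GamR R)) := by
    rw [closure_GamR hR]
    exact (isCompact_Icc.prod isCompact_Icc).union (isCompact_Icc.prod isCompact_Icc)
  exact (hf.continuousOn.integrableOn_compact hcpt).mono_set subset_closure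

theorem integral_GamR {f : ℝ × ℝ → ℝ} (hf : Continuous f) (hR : 0 < R) :
    ∫ p in GamR R, f p = (∫ x in (-1)..0, ∫ y in (-1)..0, f (x, y)) +
      (∫ x in 0..R, ∫ y in (-1)..0, f (x, y)) + ∫ y in 0..R, ∫ x in (-1)..0, f (x, y) := by
  have hint := integrableOn_GamR hf hR
  rw [integrableOn_congr_set_ae (GamR_ae_eq hR)] at hint
  have hc := continuous_integral_left hf (-1) 0
  rw [setIntegral_congr_set (GamR_ae_eq hR), setIntegral_union
    (Disjoint.set_prod_left (Ioc_disjoint_Ioc_of_le le_rfl) _ _)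
    (measurableSet_Ioc.prod measurableSet_Ioc) hint.left_of_union hint.right_of_union,
    setIntegral_Ioc_prod_Ioc hf (by norm_num) (by linarith),
    setIntegral_Ioc_prod_Ioc hf hR.le (by norm_num), ← integral_integral_comm hf,
    ← integral_integral_comm hf (-1) 0 (-1) 0, ← intervalIntegral.integral_add_adjacent_intervals
      (hc.intervalIntegrable (-1) 0) (hc.intervalIntegrable 0 R)]
  ring

theorem pi_sq_mul_integral_sq_le {u : ℝ × ℝ → ℝ} (hu : AdmR R u) (hR : 0 < R) :
    π ^ 2 * ∫ p in GamR R, u p ^ 2 ≤ (∫ p in GamR R, gradSq2 u p) +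
      (π * ∫ x in (-1)..0, ∫ y in (-1)..0, u (x, y)) ^ 2 := by
  obtain ⟨hu, hDir⟩ := hu
  have huc := hu.continuous
  have hdiff (p : ℝ × ℝ) : DifferentiableAt ℝ u p := hu.differentiable one_ne_zero p
  have hc₁ := continuous_fderiv_apply_const hu (1, 0)
  have hc₂ := continuous_fderiv_apply_const hu (0, 1)
  have hgrad := continuous_gradSq2 hu
  have hcorner := poincare_rectangle hu (show (-1 : ℝ) < 0 by norm_num)
    (show (-1 : ℝ) < 0 by norm_num) (L := 1) (by norm_num) (by norm_num)
  have hright := (integral_dirichlet_interval (huc.comp continuous_swap)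
    (hc₂.comp continuous_swap) (fun _ _ => hasDerivAt_snd (hdiff _))
    (show (-1 : ℝ) < 0 by norm_num) hR.le
    (fun x hx => hDir _ ((mem_DirB_iff hR).2 (by grind)))
    (fun x hx => hDir _ ((mem_DirB_iff hR).2 (by grind)))).trans <|
      integral_integral_mono (f := fun p => fderiv ℝ u p (0, 1) ^ 2) (by fun_prop) hgrad
        (fun p => le_add_of_nonneg_left (sq_nonneg _)) hR.le (by norm_num)
  have hup := (integral_dirichlet_interval huc hc₁ (fun _ _ => hasDerivAt_fst (hdiff _))
    (show (-1 : ℝ) < 0 by norm_num) hR.le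
    (fun y hy => hDir _ ((mem_DirB_iff hR).2 (by grind)))
    (fun y hy => hDir _ ((mem_DirB_iff hR).2 (by grind)))).trans <|
      integral_integral_mono (f := fun p => fderiv ℝ u p.swap (1, 0) ^ 2)
        (g := fun p => gradSq2 u p.swap) (by fun_prop) (by fun_prop)
        (fun p => le_add_of_nonneg_right (sq_nonneg _)) hR.le (by norm_num)
  simp only [Function.comp_apply, Prod.swap_prod_mk] at hright hup
  rw [integral_GamR hgrad hR, integral_GamR (f := fun p => u p ^ 2) (by fun_prop) hR]
  simp only [sub_neg_eq_add, zero_add, div_one, mul_one] at hcorner hright hup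
  linarith

end Guide

/-! ### A trial function with Rayleigh quotient below `π ^ 2` -/

section Trial

theorem hasDerivAt_comp_min {F : ℝ → ℝ} {c x : ℝ} (hF : Differentiable ℝ F)
    (hc : deriv F c = 0) : HasDerivAt (fun t => F (min t c)) (deriv F (min x c)) x := by
  have hleft : ∀ t ∈ Iic c, F (min t c) = F t := fun t ht => by rw [min_eq_left ht]
  have hright : ∀ t ∈ Ici c, F (min t c) = F c := fun t ht => by rw [min_eq_right ht]
  rcases lt_trichotomy x c with hx | rfl | hx
  · rw [min_eq_left hx.le]
    exact (hF x).hasDerivAt.congr_of_eventuallyEq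
      (eventually_of_mem (Iic_mem_nhds hx) hleft)
  · rw [min_self, ← hasDerivWithinAt_univ, ← Iic_union_Ici (a := x)]
    exact ((hF x).hasDerivAt.hasDerivWithinAt.congr hleft (hleft x self_mem_Iic)).union
      (hc ▸ (hasDerivWithinAt_const x _ (F x)).congr hright (hright x self_mem_Ici))
  · rw [min_eq_right hx.le, hc]
    exact (hasDerivAt_const x (F c)).congr_of_eventuallyEq
      (eventually_of_mem (Ici_mem_nhds hx) hright)

theorem deriv_comp_min {F : ℝ → ℝ} {c : ℝ} (hF : Differentiable ℝ F) (hc : deriv F c = 0) :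
    deriv (fun t => F (min t c)) = fun x => deriv F (min x c) :=
  funext fun _ => (hasDerivAt_comp_min hF hc).deriv

theorem contDiff_comp_min {F : ℝ → ℝ} {c : ℝ} (hF : ContDiff ℝ 1 F) (hc : deriv F c = 0) :
    ContDiff ℝ 1 fun t => F (min t c) := by
  have hdiff := hF.differentiable one_ne_zero
  have hF' := hF.continuous_deriv le_rfl
  refine contDiff_one_iff_deriv.2 ⟨fun _ => (hasDerivAt_comp_min hdiff hc).differentiableAt, ?_⟩
  rw [deriv_comp_min hdiff hc]
  fun_prop

theorem integral_integral_add_mul_sq {f g h k : ℝ → ℝ} (hf : Continuous f) (hg : Continuous g)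
    (hh : Continuous h) (hk : Continuous k) (a b c d : ℝ) :
    ∫ x in a..b, ∫ y in c..d, (f x * g y + h x * k y) ^ 2 =
      (∫ x in a..b, f x ^ 2) * (∫ y in c..d, g y ^ 2) +
        2 * (∫ x in a..b, f x * h x) * (∫ y in c..d, g y * k y) +
        (∫ x in a..b, h x ^ 2) * ∫ y in c..d, k y ^ 2 := by
  have hint {φ : ℝ → ℝ} (hφ : Continuous φ) (s t : ℝ) : IntervalIntegrable φ volume s t :=
    hφ.intervalIntegrable s t
  have hexp (x y : ℝ) : (f x * g y + h x * k y) ^ 2 =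
      f x ^ 2 * g y ^ 2 + 2 * (f x * h x) * (g y * k y) + h x ^ 2 * k y ^ 2 := by ring
  have hinner (x : ℝ) : ∫ y in c..d, (f x * g y + h x * k y) ^ 2 =
      f x ^ 2 * (∫ y in c..d, g y ^ 2) + 2 * (f x * h x) * (∫ y in c..d, g y * k y) +
        h x ^ 2 * ∫ y in c..d, k y ^ 2 := by
    simp only [hexp]
    rw [intervalIntegral.integral_add (hint (by fun_prop) _ _) (hint (by fun_prop) _ _),
      intervalIntegral.integral_add (hint (by fun_prop) _ _) (hint (by fun_prop) _ _)]
    simp only [intervalIntegral.integral_const_mul]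
  simp only [hinner]
  rw [intervalIntegral.integral_add (hint (by fun_prop) _ _) (hint (by fun_prop) _ _),
    intervalIntegral.integral_add (hint (by fun_prop) _ _) (hint (by fun_prop) _ _)]
  simp only [intervalIntegral.integral_mul_const, intervalIntegral.integral_const_mul]

/-- The symmetric product `σ(x₁) m(x₂) + m(x₁) σ(x₂)` of two profiles; with `m = 1` and `σ = 0` on
`[0, ∞)` it restricts to the transversal profile `σ` on each arm of the guide. -/
def symProd (m σ : ℝ → ℝ) (p : ℝ × ℝ) : ℝ := σ p.1 * m p.2 + m p.1 * σ p.2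

theorem contDiff_symProd {m σ : ℝ → ℝ} (hm : ContDiff ℝ 1 m) (hσ : ContDiff ℝ 1 σ) :
    ContDiff ℝ 1 (symProd m σ) := by
  unfold symProd
  fun_prop

theorem fderiv_symProd_fst {m σ : ℝ → ℝ} (hm : ContDiff ℝ 1 m) (hσ : ContDiff ℝ 1 σ) (x y : ℝ) :
    fderiv ℝ (symProd m σ) (x, y) (1, 0) = deriv σ x * m y + deriv m x * σ y :=
  (hasDerivAt_fst ((contDiff_symProd hm hσ).differentiable one_ne_zero (x, y))).unique
    (((hσ.differentiable one_ne_zero x).hasDerivAt.mul_const (m y)).add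
      ((hm.differentiable one_ne_zero x).hasDerivAt.mul_const (σ y)))

theorem fderiv_symProd_snd {m σ : ℝ → ℝ} (hm : ContDiff ℝ 1 m) (hσ : ContDiff ℝ 1 σ) (x y : ℝ) :
    fderiv ℝ (symProd m σ) (x, y) (0, 1) = σ x * deriv m y + m x * deriv σ y :=
  (hasDerivAt_snd ((contDiff_symProd hm hσ).differentiable one_ne_zero (x, y))).unique
    (((hm.differentiable one_ne_zero y).hasDerivAt.const_mul (σ x)).add
      ((hσ.differentiable one_ne_zero y).hasDerivAt.const_mul (m x)))

theorem admR_symProd {R : ℝ} {m σ : ℝ → ℝ} (hR : 0 < R) (hm : ContDiff ℝ 1 m)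
    (hσ : ContDiff ℝ 1 σ) (hm₀ : m (-1) = 0) (hσ₀ : σ (-1) = 0) (hσ₁ : ∀ x, 0 ≤ x → σ x = 0) :
    AdmR R (symProd m σ) := by
  refine ⟨contDiff_symProd hm hσ, fun p hp => ?_⟩
  obtain ⟨-, -, -, h | h | ⟨h₁, h₂⟩⟩ := (mem_DirB_iff hR).1 hp
  · simp only [symProd, h, hm₀, hσ₀, zero_mul, add_zero]
  · simp only [symProd, h, hm₀, hσ₀, mul_zero, add_zero]
  · simp only [symProd, hσ₁ _ h₁, hσ₁ _ h₂, mul_zero, zero_mul, add_zero]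

theorem integral_symProd_sq {R : ℝ} {m σ : ℝ → ℝ} (hR : 0 < R) (hm : ContDiff ℝ 1 m)
    (hσ : ContDiff ℝ 1 σ) (hm₁ : ∀ x, 0 ≤ x → m x = 1) (hσ₁ : ∀ x, 0 ≤ x → σ x = 0) :
    ∫ p in GamR R, symProd m σ p ^ 2 =
      2 * ((∫ x in (-1)..0, m x ^ 2) + R) * (∫ x in (-1)..0, σ x ^ 2) +
        2 * (∫ x in (-1)..0, m x * σ x) ^ 2 := by
  have hmc := hm.continuous
  have hσc := hσ.continuous
  have hu := (contDiff_symProd hm hσ).continuous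
  have hright : ∫ x in 0..R, ∫ y in (-1)..0, symProd m σ (x, y) ^ 2 =
      ∫ x in 0..R, ∫ y in (-1)..0, σ y ^ 2 :=
    intervalIntegral.integral_congr fun x hx => by
      have hx₀ : 0 ≤ x := (uIcc_of_le hR.le ▸ hx).1
      simp only [symProd, hm₁ x hx₀, hσ₁ x hx₀, zero_mul, zero_add, one_mul]
  have hup : ∫ y in 0..R, ∫ x in (-1)..0, symProd m σ (x, y) ^ 2 =
      ∫ y in 0..R, ∫ x in (-1)..0, σ x ^ 2 :=
    intervalIntegral.integral_congr fun y hy => by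
      have hy₀ : 0 ≤ y := (uIcc_of_le hR.le ▸ hy).1
      simp only [symProd, hm₁ y hy₀, hσ₁ y hy₀, mul_zero, add_zero, mul_one]
  rw [integral_GamR (f := fun p => symProd m σ p ^ 2) (by fun_prop) hR, hright, hup]
  simp only [symProd, intervalIntegral.integral_const, smul_eq_mul, sub_zero]
  rw [integral_integral_add_mul_sq hσc hmc hmc hσc]
  simp only [mul_comm (σ _)]
  ring

theorem deriv_eq_zero_of_eqOn_Ici {f : ℝ → ℝ} {a c x : ℝ} (hf : DifferentiableAt ℝ f x)
    (hc : ∀ t, a ≤ t → f t = c) (hx : a ≤ x) : deriv f x = 0 :=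
  (uniqueDiffOn_Ici x x self_mem_Ici).eq_deriv _ hf.hasDerivAt.hasDerivWithinAt
    ((hasDerivWithinAt_const x _ c).congr (fun t ht => hc t (hx.trans ht)) (hc x hx))

theorem integral_gradSq2_symProd {R : ℝ} {m σ : ℝ → ℝ} (hR : 0 < R) (hm : ContDiff ℝ 1 m)
    (hσ : ContDiff ℝ 1 σ) (hm₁ : ∀ x, 0 ≤ x → m x = 1) (hσ₁ : ∀ x, 0 ≤ x → σ x = 0) :
    ∫ p in GamR R, gradSq2 (symProd m σ) p =
      2 * ((∫ x in (-1)..0, m x ^ 2) + R) * (∫ x in (-1)..0, deriv σ x ^ 2) +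
        2 * (∫ x in (-1)..0, deriv m x ^ 2) * (∫ x in (-1)..0, σ x ^ 2) +
        4 * (∫ x in (-1)..0, m x * σ x) * ∫ x in (-1)..0, deriv m x * deriv σ x := by
  have hm' := hm.continuous_deriv le_rfl
  have hσ' := hσ.continuous_deriv le_rfl
  have hgrad (x y : ℝ) : gradSq2 (symProd m σ) (x, y) =
      (deriv σ x * m y + deriv m x * σ y) ^ 2 + (σ x * deriv m y + m x * deriv σ y) ^ 2 := by
    rw [gradSq2, fderiv_symProd_fst hm hσ, fderiv_symProd_snd hm hσ]
  have hzero {f : ℝ → ℝ} {c x : ℝ} (hf : ContDiff ℝ 1 f) (hc : ∀ t, 0 ≤ t → f t = c)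
      (hx : x ∈ uIcc 0 R) : f x = c ∧ deriv f x = 0 :=
    have hx₀ : 0 ≤ x := (uIcc_of_le hR.le ▸ hx).1
    ⟨hc x hx₀, deriv_eq_zero_of_eqOn_Ici (hf.differentiable one_ne_zero x) hc hx₀⟩
  have hright : ∫ x in 0..R, ∫ y in (-1)..0, gradSq2 (symProd m σ) (x, y) =
      ∫ x in 0..R, ∫ y in (-1)..0, deriv σ y ^ 2 :=
    intervalIntegral.integral_congr fun x hx => by
      simp only [hgrad, hzero hm hm₁ hx, hzero hσ hσ₁ hx, zero_mul, add_zero, zero_add, one_mul,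
        zero_pow two_ne_zero]
  have hup : ∫ y in 0..R, ∫ x in (-1)..0, gradSq2 (symProd m σ) (x, y) =
      ∫ y in 0..R, ∫ x in (-1)..0, deriv σ x ^ 2 :=
    intervalIntegral.integral_congr fun y hy => by
      simp only [hgrad, hzero hm hm₁ hy, hzero hσ hσ₁ hy, mul_zero, add_zero, mul_one,
        zero_pow two_ne_zero]
  rw [integral_GamR (continuous_gradSq2 (contDiff_symProd hm hσ)) hR, hright, hup,
    integral_integral_gradSq2 (contDiff_symProd hm hσ)]
  simp only [fderiv_symProd_fst hm hσ, fderiv_symProd_snd hm hσ]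
  rw [integral_integral_add_mul_sq hσ' hm.continuous hm' hσ.continuous,
    integral_integral_add_mul_sq hσ.continuous hm' hm.continuous hσ']
  simp only [mul_comm (σ _), mul_comm (deriv σ _), intervalIntegral.integral_const, smul_eq_mul,
    sub_zero]
  ring

/-- The mode `cos (π x / 2)`, which rises from `0` at `-1` to its maximum at `0`, extended by its
maximum. -/
def cosProfile (x : ℝ) : ℝ := cos (π / 2 * min x 0)

/-- The first Dirichlet mode of `(-1, 0)`, damped near `0` so that its extension by zero is `C¹`;
the damping disappears as `k → ∞`. -/
def sinProfile (k : ℕ) (x : ℝ) : ℝ := -sin (π * min x 0) * (1 - (1 + min x 0) ^ (k + 1))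

theorem hasDerivAt_cos_const_mul (c x : ℝ) :
    HasDerivAt (fun x => cos (c * x)) (-(c * sin (c * x))) x := by
  simpa [mul_comm] using (hasDerivAt_const_mul c).cos (x := x)

theorem hasDerivAt_sin_const_mul (c x : ℝ) :
    HasDerivAt (fun x => sin (c * x)) (c * cos (c * x)) x := by
  simpa [mul_comm] using (hasDerivAt_const_mul c).sin (x := x)

theorem hasDerivAt_one_add_pow (k : ℕ) (x : ℝ) :
    HasDerivAt (fun x : ℝ => (1 + x) ^ (k + 1)) ((k + 1) * (1 + x) ^ k) x :=
  (((hasDerivAt_id x).const_add 1).pow (k + 1)).congr_deriv (by simp)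

theorem hasDerivAt_damped_sin (k : ℕ) (x : ℝ) :
    HasDerivAt (fun x => -sin (π * x) * (1 - (1 + x) ^ (k + 1)))
      (-(π * cos (π * x)) * (1 - (1 + x) ^ (k + 1)) + sin (π * x) * ((k + 1) * (1 + x) ^ k)) x := by
  refine ((hasDerivAt_sin_const_mul π x).neg.mul
    ((hasDerivAt_one_add_pow k x).const_sub 1)).congr_deriv ?_
  simp only [Pi.neg_apply]
  ring

theorem contDiff_cosProfile : ContDiff ℝ 1 cosProfile :=
  contDiff_comp_min (F := fun x => cos (π / 2 * x)) (by fun_prop)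
    ((hasDerivAt_cos_const_mul _ _).deriv.trans (by simp))

theorem deriv_cosProfile (x : ℝ) : deriv cosProfile x = -(π / 2 * sin (π / 2 * min x 0)) :=
  ((hasDerivAt_comp_min (F := fun x => cos (π / 2 * x)) (by fun_prop)
    ((hasDerivAt_cos_const_mul _ _).deriv.trans (by simp))).deriv).trans
    (hasDerivAt_cos_const_mul _ _).deriv

theorem contDiff_sinProfile (k : ℕ) : ContDiff ℝ 1 (sinProfile k) :=
  contDiff_comp_min (F := fun x => -sin (π * x) * (1 - (1 + x) ^ (k + 1))) (by fun_prop)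
    ((hasDerivAt_damped_sin _ _).deriv.trans (by simp))

theorem deriv_sinProfile (k : ℕ) (x : ℝ) : deriv (sinProfile k) x =
    -(π * cos (π * min x 0)) * (1 - (1 + min x 0) ^ (k + 1)) +
      sin (π * min x 0) * ((k + 1) * (1 + min x 0) ^ k) :=
  ((hasDerivAt_comp_min (F := fun x => -sin (π * x) * (1 - (1 + x) ^ (k + 1))) (by fun_prop)
    ((hasDerivAt_damped_sin _ _).deriv.trans (by simp))).deriv).trans
    (hasDerivAt_damped_sin _ _).deriv

theorem integral_neg_one_zero_congr {f g : ℝ → ℝ} (h : ∀ x ≤ 0, f x = g x) :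
    ∫ x in (-1)..0, f x = ∫ x in (-1)..0, g x :=
  intervalIntegral.integral_congr fun x hx =>
    h x (uIcc_of_le (show (-1 : ℝ) ≤ 0 by norm_num) ▸ hx).2

theorem integral_cosProfile_sq : ∫ x in (-1)..0, cosProfile x ^ 2 = 1 / 2 := by
  rw [integral_neg_one_zero_congr (g := fun x => cos (π / 2 * x) ^ 2)
    fun x hx => by rw [cosProfile, min_eq_left hx],
    intervalIntegral.integral_comp_mul_left (fun x => cos x ^ 2) (by positivity), integral_cos_sq]
  simp only [mul_zero, mul_neg_one, sin_zero, sin_neg, cos_neg, cos_pi_div_two, smul_eq_mul]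
  field_simp
  ring

theorem integral_deriv_cosProfile_sq :
    ∫ x in (-1)..0, deriv cosProfile x ^ 2 = π ^ 2 / 8 := by
  rw [integral_neg_one_zero_congr (g := fun x => (π / 2) ^ 2 * sin (π / 2 * x) ^ 2)
    fun x hx => by rw [deriv_cosProfile, min_eq_left hx]; ring,
    intervalIntegral.integral_const_mul,
    intervalIntegral.integral_comp_mul_left (fun x => sin x ^ 2) (by positivity), integral_sin_sq]
  simp only [mul_zero, mul_neg_one, sin_zero, cos_neg, cos_pi_div_two, smul_eq_mul]
  field_simp
  ring

theorem integral_deriv_cosProfile_mul_deriv {σ : ℝ → ℝ} (hσ : ContDiff ℝ 1 σ)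
    (hleft : σ (-1) = 0) (hright : σ 0 = 0) :
    ∫ x in (-1)..0, deriv cosProfile x * deriv σ x =
      (π / 2) ^ 2 * ∫ x in (-1)..0, cosProfile x * σ x := by
  have hσ' := hσ.continuous_deriv le_rfl
  have hsin (x : ℝ) : HasDerivAt (fun x => -(π / 2 * sin (π / 2 * x)))
      (-((π / 2) ^ 2 * cos (π / 2 * x))) x :=
    ((hasDerivAt_sin_const_mul _ x).const_mul _).neg.congr_deriv (by ring)
  rw [integral_neg_one_zero_congr (g := fun x => -(π / 2 * sin (π / 2 * x)) * deriv σ x)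
    fun x hx => by rw [deriv_cosProfile, min_eq_left hx],
    intervalIntegral.integral_mul_deriv_eq_deriv_mul (fun x _ => hsin x)
      (fun x _ => (hσ.differentiable one_ne_zero x).hasDerivAt)
      (Continuous.intervalIntegrable (by fun_prop) _ _) (hσ'.intervalIntegrable _ _),
    integral_neg_one_zero_congr
      (g := fun x => -(π / 2) ^ 2 * (cosProfile x * σ x))
      fun x hx => by rw [cosProfile, min_eq_left hx]; ring,
    intervalIntegral.integral_const_mul, hleft, hright]
  ring

theorem integral_sinProfile_sq_le (k : ℕ) : ∫ x in (-1)..0, sinProfile k x ^ 2 ≤ 1 / 2 := by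
  have hsin : ∫ x in (-1)..0, sin (π * x) ^ 2 = 1 / 2 := by
    rw [intervalIntegral.integral_comp_mul_left (fun x => sin x ^ 2) pi_ne_zero, integral_sin_sq]
    simp only [mul_zero, mul_neg_one, sin_zero, sin_neg, sin_pi, smul_eq_mul]
    field_simp
    ring
  rw [← hsin]
  refine intervalIntegral.integral_mono_on (by norm_num)
    (((contDiff_sinProfile k).continuous.pow 2).intervalIntegrable _ _)
    (Continuous.intervalIntegrable (by fun_prop) _ _) fun x hx => ?_
  have hpos : 0 ≤ (1 + x) ^ (k + 1) := pow_nonneg (by linarith [hx.1]) _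
  have hle : (1 + x) ^ (k + 1) ≤ 1 := pow_le_one₀ (by linarith [hx.1]) (by linarith [hx.2])
  rw [sinProfile, min_eq_left hx.2, mul_pow, neg_sq]
  exact mul_le_of_le_one_right (sq_nonneg _) (pow_le_one₀ (by linarith) (by linarith))

theorem le_integral_cosProfile_mul_sinProfile (k : ℕ) :
    4 / (3 * π) - 1 / (k + 2) ≤ ∫ x in (-1)..0, cosProfile x * sinProfile k x := by
  have hderiv (x : ℝ) : HasDerivAt
      (fun x => 4 / (3 * π) * cos (π / 2 * x) ^ 3 - (1 + x) ^ (k + 2) / (k + 2))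
      (cos (π / 2 * x) * -sin (π * x) - (1 + x) ^ (k + 1)) x := by
    refine ((((hasDerivAt_cos_const_mul (π / 2) x).pow 3).const_mul _).sub
      ((hasDerivAt_one_add_pow (k + 1) x).div_const _)).congr_deriv ?_
    rw [show π * x = 2 * (π / 2 * x) by ring, sin_two_mul]
    push_cast
    field_simp
    ring
  have hbound : ∀ x ∈ Ioo (-1 : ℝ) 0,
      cos (π / 2 * x) * -sin (π * x) - (1 + x) ^ (k + 1) ≤ cosProfile x * sinProfile k x := by
    intro x hx
    have hpow : 0 ≤ (1 + x) ^ (k + 1) := pow_nonneg (by linarith [hx.1]) _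
    have htrig : cos (π / 2 * x) * -sin (π * x) ≤ 1 := by
      refine (le_abs_self _).trans ?_
      rw [abs_mul, abs_neg]
      exact mul_le_one₀ (abs_cos_le_one _) (abs_nonneg _) (abs_sin_le_one _)
    rw [cosProfile, sinProfile, min_eq_left hx.2.le]
    linarith [mul_le_mul_of_nonneg_right htrig hpow]
  have hcont := (contDiff_cosProfile.mul (contDiff_sinProfile k)).continuous
  convert intervalIntegral.sub_le_integral_of_hasDeriv_right_of_le (by norm_num)
    (fun x _ => (hderiv x).continuousAt.continuousWithinAt)
    (fun x _ => (hderiv x).hasDerivWithinAt) hcont.continuousOn.integrableOn_Icc hbound using 1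
  simp

theorem mul_pow_mul_one_sub_le (k : ℕ) {t : ℝ} (h₀ : 0 ≤ t) (h₁ : t ≤ 1) :
    (k + 1) * t ^ k * (1 - t) ≤ 1 - t ^ (k + 1) := by
  induction k with
  | zero => simp
  | succ k ih =>
    have hpow : t ^ (k + 1) ≤ 1 := pow_le_one₀ h₀ h₁
    push_cast
    calc (k + 1 + 1) * t ^ (k + 1) * (1 - t)
        = t * ((k + 1) * t ^ k * (1 - t)) + t ^ (k + 1) * (1 - t) := by ring
      _ ≤ t * (1 - t ^ (k + 1)) + t ^ (k + 1) * (1 - t) := by gcongr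
      _ ≤ 1 - t ^ (k + 1 + 1) := by
        rw [pow_succ t (k + 1)]
        nlinarith [mul_nonneg (sub_nonneg.2 h₁) (sub_nonneg.2 hpow)]

theorem sin_sq_mul_deriv_pow_sq_le (k : ℕ) {x : ℝ} (hx : x ∈ Icc (-1) 0) :
    (sin (π * x) * ((k + 1) * (1 + x) ^ k)) ^ 2 ≤ π ^ 2 * ((k + 1) * (1 + x) ^ k * -x) := by
  have ht : 0 ≤ 1 + x := by linarith [hx.1]
  have hnonneg : 0 ≤ (k + 1) * (1 + x) ^ k * -x :=
    mul_nonneg (by positivity) (by linarith [hx.2])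
  have hle : (k + 1) * (1 + x) ^ k * -x ≤ 1 := by
    have h := mul_pow_mul_one_sub_le k ht (by linarith [hx.2])
    rw [show 1 - (1 + x) = -x by ring] at h
    linarith [pow_nonneg ht (k + 1)]
  have hsin : sin (π * x) ^ 2 ≤ (π * x) ^ 2 := sq_le_sq.2 abs_sin_le_abs
  calc (sin (π * x) * ((k + 1) * (1 + x) ^ k)) ^ 2
      = sin (π * x) ^ 2 * ((k + 1) * (1 + x) ^ k) ^ 2 := mul_pow _ _ _
    _ ≤ (π * x) ^ 2 * ((k + 1) * (1 + x) ^ k) ^ 2 := by gcongr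
    _ = π ^ 2 * ((k + 1) * (1 + x) ^ k * -x) ^ 2 := by ring
    _ ≤ π ^ 2 * ((k + 1) * (1 + x) ^ k * -x) := by
      gcongr
      exact pow_le_of_le_one hnonneg hle two_ne_zero

theorem hasDerivAt_sinProfile_primitive (k : ℕ) (x : ℝ) : HasDerivAt
    (fun x => π * (sin (π * x) * cos (π * x)) * (1 - (1 + x) ^ (k + 1)) ^ 2 +
      π ^ 2 * ((1 + x) ^ (k + 1) - (k + 1) / (k + 2) * (1 + x) ^ (k + 2)))
    (π ^ 2 * (cos (π * x) ^ 2 - sin (π * x) ^ 2) * (1 - (1 + x) ^ (k + 1)) ^ 2 -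
        2 * π * (sin (π * x) * cos (π * x)) * (1 - (1 + x) ^ (k + 1)) * ((k + 1) * (1 + x) ^ k) +
      π ^ 2 * ((k + 1) * (1 + x) ^ k * -x)) x := by
  refine (((((hasDerivAt_sin_const_mul π x).mul (hasDerivAt_cos_const_mul π x)).const_mul π).mul
    (((hasDerivAt_one_add_pow k x).const_sub 1).pow 2)).add
    (((hasDerivAt_one_add_pow k x).sub
      ((hasDerivAt_one_add_pow (k + 1) x).const_mul _)).const_mul _)).congr_deriv ?_
  push_cast
  simp only [Pi.mul_apply, Pi.pow_apply]
  field_simp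
  ring

theorem integral_deriv_sinProfile_sq_le (k : ℕ) :
    ∫ x in (-1)..0, deriv (sinProfile k) x ^ 2 ≤
      π ^ 2 * (∫ x in (-1)..0, sinProfile k x ^ 2) + π ^ 2 / (k + 2) := by
  have hσ := contDiff_sinProfile k
  have hσ' := hσ.continuous_deriv le_rfl
  have hσc := hσ.continuous
  have h := intervalIntegral.integral_le_sub_of_hasDeriv_right_of_le (neg_nonpos.2 zero_le_one)
    (fun x _ => (hasDerivAt_sinProfile_primitive k x).continuousAt.continuousWithinAt)
    (fun x _ => (hasDerivAt_sinProfile_primitive k x).hasDerivWithinAt)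
    (φ := fun x => deriv (sinProfile k) x ^ 2 - π ^ 2 * sinProfile k x ^ 2)
    (Continuous.integrableOn_Icc (by fun_prop)) fun x hx => by
      rw [deriv_sinProfile, sinProfile, min_eq_left hx.2.le]
      linarith [sin_sq_mul_deriv_pow_sq_le k (Ioo_subset_Icc_self hx)]
  rw [intervalIntegral.integral_sub (Continuous.intervalIntegrable (by fun_prop) _ _)
    (Continuous.intervalIntegrable (by fun_prop) _ _), intervalIntegral.integral_const_mul] at h
  simp only [mul_zero, sin_zero, add_zero, one_pow, add_neg_cancel, mul_neg_one, sin_neg, sin_pi,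
    zero_mul, zero_pow (Nat.succ_ne_zero _)] at h
  refine sub_le_iff_le_add'.1 (h.trans_eq ?_)
  field_simp
  ring

theorem eventually_trial_energy_neg (R : ℝ) : ∀ᶠ k : ℕ in atTop,
    (1 + 2 * R) * (1 / ((k : ℝ) + 2)) + 1 / 8 < (4 / (3 * π) - 1 / ((k : ℝ) + 2)) ^ 2 ∧
      0 ≤ 4 / (3 * π) - 1 / ((k : ℝ) + 2) := by
  have hinv : Tendsto (fun k : ℕ => 1 / ((k : ℝ) + 2)) atTop (𝓝 0) :=
    tendsto_const_nhds.div_atTop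
      (tendsto_atTop_add_const_right _ 2 tendsto_natCast_atTop_atTop)
  have hpi : 3 * π < 10 := by linarith [pi_lt_d2]
  have hlt : (1 + 2 * R) * 0 + 1 / 8 < (4 / (3 * π) - 0) ^ 2 := by
    rw [mul_zero, zero_add, sub_zero, div_pow, div_lt_div_iff₀ (by norm_num) (by positivity)]
    nlinarith [pi_pos]
  have hleft := (hinv.const_mul (1 + 2 * R)).add_const (1 / 8)
  have hright := hinv.const_sub (4 / (3 * π))
  exact (hleft.eventually_lt (hright.pow 2) hlt).and
    (hright.eventually (eventually_ge_nhds (by rw [sub_zero]; positivity)))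

theorem exists_admR_integral_gradSq2_lt {R : ℝ} (hR : 0 < R) :
    ∃ u, AdmR R u ∧ ∫ p in GamR R, gradSq2 u p < π ^ 2 * ∫ p in GamR R, u p ^ 2 := by
  obtain ⟨k, henergy, hnonneg⟩ := (eventually_trial_energy_neg R).exists
  have hm := contDiff_cosProfile
  have hσ := contDiff_sinProfile k
  have hm₁ : ∀ x, 0 ≤ x → cosProfile x = 1 := fun x hx => by simp [cosProfile, hx]
  have hm₀ : cosProfile (-1) = 0 := by simp [cosProfile]
  have hσ₁ : ∀ x, 0 ≤ x → sinProfile k x = 0 := fun x hx => by simp [sinProfile, hx]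
  have hσ₀ : sinProfile k (-1) = 0 := by simp [sinProfile]
  refine ⟨symProd cosProfile (sinProfile k), admR_symProd hR hm hσ hm₀ hσ₀ hσ₁, ?_⟩
  rw [integral_gradSq2_symProd hR hm hσ hm₁ hσ₁, integral_symProd_sq hR hm hσ hm₁ hσ₁,
    integral_deriv_cosProfile_mul_deriv hσ hσ₀ (hσ₁ 0 le_rfl), integral_cosProfile_sq,
    integral_deriv_cosProfile_sq]
  have hmass := integral_sinProfile_sq_le k
  have hkinetic := integral_deriv_sinProfile_sq_le k
  have hoverlap := pow_le_pow_left₀ hnonneg (le_integral_cosProfile_mul_sinProfile k) 2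
  set s := ∫ x in (-1)..0, sinProfile k x ^ 2
  set d := ∫ x in (-1)..0, deriv (sinProfile k) x ^ 2
  set o := ∫ x in (-1)..0, cosProfile x * sinProfile k x
  have hpi : 0 < π ^ 2 := by positivity
  calc 2 * (1 / 2 + R) * d + 2 * (π ^ 2 / 8) * s + 4 * o * ((π / 2) ^ 2 * o)
      ≤ 2 * (1 / 2 + R) * (π ^ 2 * s + π ^ 2 / (k + 2)) + 2 * (π ^ 2 / 8) * s +
          4 * o * ((π / 2) ^ 2 * o) := by gcongr
    _ = π ^ 2 * ((1 + 2 * R) * (1 / (k + 2)) + s / 4 - o ^ 2) +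
          π ^ 2 * (2 * (1 / 2 + R) * s + 2 * o ^ 2) := by ring
    _ < π ^ 2 * (2 * (1 / 2 + R) * s + 2 * o ^ 2) := by
      nlinarith

end Trial

/-! ### Weighted quadratic forms -/

section WeightedForm

open scoped BoundedContinuousFunction

variable {E : Type*} [NormedRing E] [NormedAlgebra ℝ E]

theorem analyticAt_one_add_smul (a : E) (s : ℝ) : AnalyticAt ℝ (fun s : ℝ => 1 + s • a) s :=
  analyticAt_const.add (analyticAt_id.smul analyticAt_const)

theorem analyticAt_ringInverse_one_add_smul [HasSummableGeomSeries E] (a : E) :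
    AnalyticAt ℝ (fun s : ℝ => Ring.inverse (1 + s • a)) 0 := by
  refine AnalyticAt.fun_comp (g := Ring.inverse) ?_ (analyticAt_one_add_smul a 0)
  simpa only [zero_smul, add_zero, Units.val_one] using analyticAt_inverse (𝕜 := ℝ) (1 : Eˣ)

theorem eventually_isUnit_one_add_smul [HasSummableGeomSeries E] (a : E) :
    ∀ᶠ s : ℝ in 𝓝 0, IsUnit (1 + s • a) :=
  (analyticAt_one_add_smul a 0).continuousAt.eventually
    (Units.isOpen.mem_nhds (by simp))

variable {α : Type*} [TopologicalSpace α]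

theorem boundedContinuous_ringInverse_apply {f : α →ᵇ ℝ} (hf : IsUnit f) (x : α) :
    Ring.inverse f x = (f x)⁻¹ :=
  eq_inv_of_mul_eq_one_left
    (congrArg (fun g : α →ᵇ ℝ => g x) (Ring.inverse_mul_cancel f hf))

variable [MeasurableSpace α] [BorelSpace α] [SecondCountableTopologyEither α ℝ]

/-- Multiplication of `L²` functions by bounded continuous functions. -/
def lpMul (μ : Measure α) [IsFiniteMeasure μ] : (α →ᵇ ℝ) →L[ℝ] Lp ℝ 2 μ →L[ℝ] Lp ℝ 2 μ :=
  ((ContinuousLinearMap.mul ℝ ℝ).holderL μ ⊤ 2 2) ∘L (BoundedContinuousFunction.toLp ⊤ μ ℝ)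

variable {μ : Measure α} [IsFiniteMeasure μ]

theorem coeFn_lpMul (a : α →ᵇ ℝ) (f : Lp ℝ 2 μ) : lpMul μ a f =ᵐ[μ] fun p => a p * f p := by
  filter_upwards [(ContinuousLinearMap.mul ℝ ℝ).coeFn_holder (r := 2)
    (BoundedContinuousFunction.toLp ⊤ μ ℝ a) f,
    BoundedContinuousFunction.coeFn_toLp ℝ (p := ⊤) (μ := μ) a] with p hmul ha
  exact hmul.trans (congrArg (· * f p) ha)

theorem inner_lpMul (a : α →ᵇ ℝ) (f g : Lp ℝ 2 μ) :
    ⟪lpMul μ a f, g⟫ = ∫ p, a p * (f p * g p) ∂μ := by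
  rw [L2.inner_def]
  refine integral_congr_ae ?_
  filter_upwards [coeFn_lpMul a f] with p hp
  rw [hp, RCLike.inner_apply, conj_trivial]
  ring

variable {V : Type*} [NormedAddCommGroup V] [InnerProductSpace ℝ V] [CompleteSpace V]

/-- The operator `D† a D` of the quadratic form `v ↦ ∫ a (D v) ^ 2`, as a linear function of the
weight `a`. -/
def weightedOp (D : V →L[ℝ] Lp ℝ 2 μ) : (α →ᵇ ℝ) →L[ℝ] V →L[ℝ] V :=
  ContinuousLinearMap.compL ℝ V (Lp ℝ 2 μ) V D.adjoint ∘L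
    (ContinuousLinearMap.compL ℝ V (Lp ℝ 2 μ) (Lp ℝ 2 μ)).flip D ∘L lpMul μ

theorem analyticAt_weightedOp (D : V →L[ℝ] Lp ℝ 2 μ) {a : ℝ → α →ᵇ ℝ} {s : ℝ}
    (ha : AnalyticAt ℝ a s) : AnalyticAt ℝ (fun s => weightedOp D (a s)) s :=
  ((weightedOp D).analyticAt (a s)).fun_comp ha

theorem inner_weightedOp (D : V →L[ℝ] Lp ℝ 2 μ) (a : α →ᵇ ℝ) (v w : V) :
    ⟪weightedOp D a v, w⟫ = ∫ p, a p * (D v p * D w p) ∂μ :=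
  (ContinuousLinearMap.adjoint_inner_left D w _).trans (inner_lpMul a (D v) (D w))

theorem isSymmetric_weightedOp (D : V →L[ℝ] Lp ℝ 2 μ) (a : α →ᵇ ℝ) :
    (weightedOp D a : V →ₗ[ℝ] V).IsSymmetric := fun v w => by
  rw [ContinuousLinearMap.coe_coe, inner_weightedOp, real_inner_comm, inner_weightedOp]
  simp only [mul_comm (D v _)]

theorem inner_weightedOp_self_of_ae_eq {D : V →L[ℝ] Lp ℝ 2 μ} {v : V} {f : α → ℝ}
    (hf : D v =ᵐ[μ] f) (a : α →ᵇ ℝ) : ⟪weightedOp D a v, v⟫ = ∫ p, a p * f p ^ 2 ∂μ := by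
  rw [inner_weightedOp]
  refine integral_congr_ae ?_
  filter_upwards [hf] with p hp
  rw [hp, sq]

theorem inner_weightedOp_one_self (D : V →L[ℝ] Lp ℝ 2 μ) (v : V) :
    ⟪weightedOp D 1 v, v⟫ = ‖D v‖ ^ 2 := by
  rw [inner_weightedOp, ← real_inner_self_eq_norm_sq, L2.inner_def]
  simp only [BoundedContinuousFunction.coe_one, Pi.one_apply, one_mul, RCLike.inner_apply,
    conj_trivial]

end WeightedForm

/-! ### The energy space of the guide -/

section EnergySpace

variable {R : ℝ}

instance isFiniteMeasure_restrict_GamR (R : ℝ) : IsFiniteMeasure (volume.restrict (GamR R)) := by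
  rw [isFiniteMeasure_restrict]
  refine (measure_mono_top ?_).mt
    (isCompact_Icc.prod isCompact_Icc : IsCompact
      (Icc (-1 - (R + 1)) (-1 + (R + 1)) ×ˢ Icc (-1 - (R + 1)) (-1 + (R + 1)))).measure_ne_top
  rw [GamR, Box_eq_prod]
  exact inter_subset_right.trans (prod_mono Ioo_subset_Icc_self Ioo_subset_Icc_self)

/-- The function `u` together with its two partial derivatives. -/
def jet (u : ℝ × ℝ → ℝ) : Fin 3 → ℝ × ℝ → ℝ :=
  ![u, fun p => fderiv ℝ u p (1, 0), fun p => fderiv ℝ u p (0, 1)]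

theorem continuous_jet {u : ℝ × ℝ → ℝ} (hu : ContDiff ℝ 1 u) (i : Fin 3) :
    Continuous (jet u i) := by
  fin_cases i
  · exact hu.continuous
  · exact continuous_fderiv_apply_const hu _
  · exact continuous_fderiv_apply_const hu _

theorem jet_zero (i : Fin 3) (p : ℝ × ℝ) : jet 0 i p = 0 := by
  fin_cases i <;> simp [jet]

theorem jet_add {u v : ℝ × ℝ → ℝ} (hu : Differentiable ℝ u) (hv : Differentiable ℝ v)
    (i : Fin 3) (p : ℝ × ℝ) : jet (u + v) i p = jet u i p + jet v i p := by
  fin_cases i <;> simp [jet, fderiv_add (hu p) (hv p)]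

theorem jet_smul (c : ℝ) {u : ℝ × ℝ → ℝ} (hu : Differentiable ℝ u)
    (i : Fin 3) (p : ℝ × ℝ) : jet (c • u) i p = c * jet u i p := by
  fin_cases i <;> simp [jet, fderiv_const_smul (hu p)]

/-- The triples of `L²` classes `(u, ∂₁u, ∂₂u)` of the admissible functions `u`. -/
def admJets (R : ℝ) : Submodule ℝ (PiLp 2 fun _ : Fin 3 => Lp ℝ 2 (volume.restrict (GamR R))) where
  carrier := {x | ∃ u, AdmR R u ∧ ∀ i, x i =ᵐ[volume.restrict (GamR R)] jet u i}
  add_mem' := by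
    rintro x y ⟨u, ⟨hu, hu₀⟩, hx⟩ ⟨v, ⟨hv, hv₀⟩, hy⟩
    refine ⟨u + v, ⟨hu.add hv, fun p hp => by simp [hu₀ p hp, hv₀ p hp]⟩, fun i => ?_⟩
    filter_upwards [hx i, hy i, Lp.coeFn_add (x i) (y i)] with p hxp hyp hadd
    rw [PiLp.add_apply, hadd, Pi.add_apply, hxp, hyp,
      jet_add (hu.differentiable one_ne_zero) (hv.differentiable one_ne_zero)]
  zero_mem' := by
    refine ⟨0, ⟨contDiff_const, fun p _ => rfl⟩, fun i => ?_⟩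
    filter_upwards [Lp.coeFn_zero ℝ 2 (volume.restrict (GamR R))] with p hzero
    rw [PiLp.zero_apply, hzero, Pi.zero_apply, jet_zero]
  smul_mem' := by
    rintro c x ⟨u, ⟨hu, hu₀⟩, hx⟩
    refine ⟨c • u, ⟨hu.const_smul c, fun p hp => by simp [hu₀ p hp]⟩, fun i => ?_⟩
    filter_upwards [hx i, Lp.coeFn_smul c (x i)] with p hxp hsmul
    rw [PiLp.smul_apply, hsmul, Pi.smul_apply, hxp, smul_eq_mul,
      jet_smul c (hu.differentiable one_ne_zero)]

/-- The form domain of the mixed Laplacian on `Γ_R`: the closure of the admissible functions in the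
`H¹` norm, realised inside `L² × L² × L²` by `u ↦ (u, ∂₁u, ∂₂u)`. -/
abbrev EnergySpace (R : ℝ) : Type := (admJets R).topologicalClosure

instance (R : ℝ) : CompleteSpace (EnergySpace R) :=
  (admJets R).isClosed_topologicalClosure.completeSpace_coe

/-- The components `u`, `∂₁u` and `∂₂u` of an element of the energy space. -/
def component (R : ℝ) (i : Fin 3) : EnergySpace R →L[ℝ] Lp ℝ 2 (volume.restrict (GamR R)) :=
  PiLp.proj 2 _ i ∘L (admJets R).topologicalClosure.subtypeL

theorem exists_component_ae_eq_jet {u : ℝ × ℝ → ℝ} (hR : 0 < R) (hu : AdmR R u) :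
    ∃ v : EnergySpace R, ∀ i, component R i v =ᵐ[volume.restrict (GamR R)] jet u i := by
  have hmem (i : Fin 3) : MemLp (jet u i) 2 (volume.restrict (GamR R)) :=
    (memLp_two_iff_integrable_sq (continuous_jet hu.1 i).aestronglyMeasurable).2
      (integrableOn_GamR ((continuous_jet hu.1 i).pow 2) hR)
  exact ⟨⟨WithLp.toLp 2 fun i => (hmem i).toLp (jet u i),
    subset_closure ⟨u, hu, fun i => (hmem i).coeFn_toLp⟩⟩, fun i => (hmem i).coeFn_toLp⟩

theorem energySpace_induction {P : EnergySpace R → Prop} (hP : IsClosed {v | P v})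
    (hjet : ∀ u, AdmR R u → ∀ v : EnergySpace R,
      (∀ i, component R i v =ᵐ[volume.restrict (GamR R)] jet u i) → P v) (v : EnergySpace R) :
    P v := by
  have hsub : {v : EnergySpace R | v.1 ∈ admJets R} ⊆ {v | P v} :=
    fun v ⟨u, hu, hv⟩ => hjet u hu v hv
  refine closure_minimal hsub hP (closure_subtype.2 ?_)
  rw [show Subtype.val '' {v : EnergySpace R | v.1 ∈ admJets R} = admJets R from
    Subtype.coe_image_of_subset subset_closure]
  exact v.2

theorem norm_sq_eq_sum_component (v : EnergySpace R) :
    ‖v‖ ^ 2 = ‖component R 0 v‖ ^ 2 + ‖component R 1 v‖ ^ 2 + ‖component R 2 v‖ ^ 2 := by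
  change ‖v.1‖ ^ 2 = _
  rw [PiLp.norm_sq_eq_of_L2, Fin.sum_univ_three]
  rfl

theorem norm_sq_component {u : ℝ × ℝ → ℝ} {v : EnergySpace R} {i : Fin 3}
    (hv : component R i v =ᵐ[volume.restrict (GamR R)] jet u i) :
    ‖component R i v‖ ^ 2 = ∫ p in GamR R, jet u i p ^ 2 :=
  (inner_weightedOp_one_self (component R i) v).symm.trans
    ((inner_weightedOp_self_of_ae_eq hv 1).trans (by
      simp only [BoundedContinuousFunction.coe_one, Pi.one_apply, one_mul]))

/-- `π` times the Riesz representative of the integral over the corner square. -/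
def cornerFunctional (R : ℝ) : EnergySpace R :=
  (component R 0).adjoint (indicatorConstLp 2 (s := Ioc (-1) 0 ×ˢ Ioc (-1) 0)
    (measurableSet_Ioc.prod measurableSet_Ioc) (measure_ne_top _ _) π)

theorem inner_cornerFunctional (hR : 0 < R) {u : ℝ × ℝ → ℝ} (hu : Continuous u)
    {v : EnergySpace R} (hv : component R 0 v =ᵐ[volume.restrict (GamR R)] u) :
    ⟪cornerFunctional R, v⟫ = π * ∫ x in (-1)..0, ∫ y in (-1)..0, u (x, y) := by
  have hinner := (ContinuousLinearMap.adjoint_inner_left (component R 0) v _).trans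
    (L2.inner_indicatorConstLp_eq_inner_setIntegral ℝ
      (s := Ioc (-1) 0 ×ˢ Ioc (-1) 0) (measurableSet_Ioc.prod measurableSet_Ioc)
      (measure_ne_top _ _) π (component R 0 v))
  refine hinner.trans ?_
  have hset : (Ioc (-1) 0 ×ˢ Ioc (-1) 0 ∩ GamR R : Set (ℝ × ℝ)) =ᵐ[volume]
      (Ioc (-1) 0 ×ˢ Ioc (-1) 0 : Set (ℝ × ℝ)) := by
    refine ((EventuallyEq.refl _ _).inter (GamR_ae_eq hR)).trans (EventuallyEq.of_eq ?_)
    exact inter_eq_left.2 (subset_union_of_subset_left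
      (prod_mono subset_rfl (Ioc_subset_Ioc_right hR.le)) _)
  rw [integral_congr_ae (ae_restrict_of_ae hv), Measure.restrict_restrict
    (measurableSet_Ioc.prod measurableSet_Ioc), setIntegral_congr_set hset,
    setIntegral_Ioc_prod_Ioc hu (by norm_num) (by norm_num), RCLike.inner_apply, conj_trivial,
    mul_comm]

theorem pi_sq_mul_norm_sq_component_le (hR : 0 < R) (v : EnergySpace R) :
    π ^ 2 * ‖component R 0 v‖ ^ 2 ≤
      ‖component R 1 v‖ ^ 2 + ‖component R 2 v‖ ^ 2 + ⟪cornerFunctional R, v⟫ ^ 2 := by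
  refine energySpace_induction (P := fun v => π ^ 2 * ‖component R 0 v‖ ^ 2 ≤
    ‖component R 1 v‖ ^ 2 + ‖component R 2 v‖ ^ 2 + ⟪cornerFunctional R, v⟫ ^ 2)
    (isClosed_le (by fun_prop) (by fun_prop)) (fun u hu v hv => ?_) v
  have hint (i : Fin 3) : IntegrableOn (fun p => jet u i p ^ 2) (GamR R) :=
    integrableOn_GamR ((continuous_jet hu.1 i).pow 2) hR
  rw [norm_sq_component (hv 0), norm_sq_component (hv 1), norm_sq_component (hv 2),
    inner_cornerFunctional hR hu.1.continuous (hv 0), ← integral_add (hint 1) (hint 2)]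
  exact pi_sq_mul_integral_sq_le hu hR

end EnergySpace

/-! ### Stretching the guide -/

section Stretch

open scoped BoundedContinuousFunction

/-- A `C¹` diffeomorphism of the line which, applied to both coordinates, carries `Γ_R` to
`Γ_{R'}`. -/
structure Stretch (R R' : ℝ) where
  e : ℝ ≃o ℝ
  contDiff : ContDiff ℝ 1 e
  contDiff_symm : ContDiff ℝ 1 e.symm
  map_neg_one : e (-1) = -1
  map_zero : e 0 = 0
  map_right : e R = R'

namespace Stretch

variable {R R' : ℝ} (S : Stretch R R')

/-- The inverse stretch. -/
def symm : Stretch R' R where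
  e := S.e.symm
  contDiff := S.contDiff_symm
  contDiff_symm := S.contDiff
  map_neg_one := S.e.symm_apply_eq.2 S.map_neg_one.symm
  map_zero := S.e.symm_apply_eq.2 S.map_zero.symm
  map_right := S.e.symm_apply_eq.2 S.map_right.symm

/-- The induced diffeomorphism of the plane. -/
def planeMap (p : ℝ × ℝ) : ℝ × ℝ := (S.e p.1, S.e p.2)

theorem planeMap_symm_planeMap (p : ℝ × ℝ) : S.symm.planeMap (S.planeMap p) = p :=
  Prod.ext (S.e.symm_apply_apply p.1) (S.e.symm_apply_apply p.2)

theorem planeMap_planeMap_symm (p : ℝ × ℝ) : S.planeMap (S.symm.planeMap p) = p :=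
  S.symm.planeMap_symm_planeMap p

theorem contDiff_planeMap : ContDiff ℝ 1 S.planeMap :=
  (S.contDiff.comp contDiff_fst).prodMk (S.contDiff.comp contDiff_snd)

theorem neg_one_lt_apply_iff {t : ℝ} : -1 < S.e t ↔ -1 < t := by
  conv_lhs => rw [← S.map_neg_one, S.e.lt_iff_lt]

theorem neg_one_le_apply_iff {t : ℝ} : -1 ≤ S.e t ↔ -1 ≤ t := by
  conv_lhs => rw [← S.map_neg_one, S.e.le_iff_le]

theorem apply_eq_neg_one_iff {t : ℝ} : S.e t = -1 ↔ t = -1 := by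
  conv_lhs => rw [← S.map_neg_one, S.e.injective.eq_iff]

theorem apply_lt_zero_iff {t : ℝ} : S.e t < 0 ↔ t < 0 := by
  conv_lhs => rw [← S.map_zero, S.e.lt_iff_lt]

theorem apply_le_zero_iff {t : ℝ} : S.e t ≤ 0 ↔ t ≤ 0 := by
  conv_lhs => rw [← S.map_zero, S.e.le_iff_le]

theorem zero_le_apply_iff {t : ℝ} : 0 ≤ S.e t ↔ 0 ≤ t := by
  conv_lhs => rw [← S.map_zero, S.e.le_iff_le]

theorem apply_lt_right_iff {t : ℝ} : S.e t < R' ↔ t < R := by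
  simpa only [S.map_right] using S.e.lt_iff_lt (x := t) (y := R)

theorem planeMap_mem_GamR_iff (hR : 0 < R) (hR' : 0 < R') {p : ℝ × ℝ} :
    S.planeMap p ∈ GamR R' ↔ p ∈ GamR R := by
  simp only [GamR_eq_union hR, GamR_eq_union hR', planeMap, mem_union, mem_prod, mem_Ioo,
    neg_one_lt_apply_iff, apply_lt_zero_iff, apply_lt_right_iff]

theorem image_planeMap_GamR (hR : 0 < R) (hR' : 0 < R') : S.planeMap '' GamR R = GamR R' := by
  ext p
  rw [← S.planeMap_planeMap_symm p, S.planeMap_mem_GamR_iff hR hR',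
    (Function.LeftInverse.injective S.planeMap_symm_planeMap).mem_set_image]

theorem planeMap_mem_DirB_iff (hR : 0 < R) (hR' : 0 < R') {p : ℝ × ℝ} :
    S.planeMap p ∈ DirB R' ↔ p ∈ DirB R := by
  simp only [mem_DirB_iff hR, mem_DirB_iff hR', planeMap, neg_one_le_apply_iff,
    apply_eq_neg_one_iff, apply_le_zero_iff, zero_le_apply_iff, apply_lt_right_iff]

theorem admR_comp_planeMap (hR : 0 < R) (hR' : 0 < R') {u : ℝ × ℝ → ℝ} (hu : AdmR R' u) :
    AdmR R (u ∘ S.planeMap) :=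
  ⟨hu.1.comp S.contDiff_planeMap, fun _ hp => hu.2 _ ((S.planeMap_mem_DirB_iff hR hR').2 hp)⟩

theorem hasDerivAt (t : ℝ) : HasDerivAt S.e (deriv S.e t) t :=
  (S.contDiff.differentiable one_ne_zero t).hasDerivAt

theorem hasFDerivAt_planeMap (p : ℝ × ℝ) :
    HasFDerivAt S.planeMap ((ContinuousLinearMap.toSpanSingleton ℝ (deriv S.e p.1)).prodMap
      (ContinuousLinearMap.toSpanSingleton ℝ (deriv S.e p.2))) p :=
  HasFDerivAt.prodMap p (S.hasDerivAt p.1).hasFDerivAt (S.hasDerivAt p.2).hasFDerivAt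

theorem integral_GamR_comp_planeMap (hR : 0 < R) (hR' : 0 < R') (f : ℝ × ℝ → ℝ) :
    ∫ p in GamR R', f p =
      ∫ p in GamR R, deriv S.e p.1 * deriv S.e p.2 * f (S.planeMap p) := by
  have hmeas : MeasurableSet (GamR R) := (isOpen_GamR hR).measurableSet
  have hdet (p : ℝ × ℝ) : |((ContinuousLinearMap.toSpanSingleton ℝ (deriv S.e p.1)).prodMap
      (ContinuousLinearMap.toSpanSingleton ℝ (deriv S.e p.2))).det| =
      deriv S.e p.1 * deriv S.e p.2 := by
    have hnonneg (t : ℝ) : 0 ≤ deriv S.e t := S.e.monotone.deriv_nonneg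
    rw [ContinuousLinearMap.det, ContinuousLinearMap.coe_prodMap, LinearMap.det_prodMap]
    simp [abs_of_nonneg (hnonneg _)]
  rw [← S.image_planeMap_GamR hR hR', integral_image_eq_integral_abs_det_fderiv_smul volume hmeas
    (fun p _ => (S.hasFDerivAt_planeMap p).hasFDerivWithinAt)
    (Function.LeftInverse.injective S.planeMap_symm_planeMap).injOn]
  simp only [hdet, smul_eq_mul]

theorem fderiv_comp_planeMap {u : ℝ × ℝ → ℝ} (hu : ContDiff ℝ 1 u) (p e : ℝ × ℝ) :
    fderiv ℝ (u ∘ S.planeMap) p e =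
      fderiv ℝ u (S.planeMap p) (e.1 * deriv S.e p.1, e.2 * deriv S.e p.2) := by
  rw [((hu.differentiable one_ne_zero _).hasFDerivAt.comp p (S.hasFDerivAt_planeMap p)).fderiv]
  rfl

theorem fderiv_comp_planeMap_fst {u : ℝ × ℝ → ℝ} (hu : ContDiff ℝ 1 u) (p : ℝ × ℝ) :
    fderiv ℝ (u ∘ S.planeMap) p (1, 0) = deriv S.e p.1 * fderiv ℝ u (S.planeMap p) (1, 0) := by
  rw [S.fderiv_comp_planeMap hu, ← smul_eq_mul (deriv _ _), ← map_smul]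
  simp

theorem fderiv_comp_planeMap_snd {u : ℝ × ℝ → ℝ} (hu : ContDiff ℝ 1 u) (p : ℝ × ℝ) :
    fderiv ℝ (u ∘ S.planeMap) p (0, 1) = deriv S.e p.2 * fderiv ℝ u (S.planeMap p) (0, 1) := by
  rw [S.fderiv_comp_planeMap hu, ← smul_eq_mul (deriv _ _), ← map_smul]
  simp

end Stretch

theorem exists_cutoff {R : ℝ} (hR : 0 < R) : ∃ χ : ℝ → ℝ, ContDiff ℝ 1 χ ∧
    (∀ t ≤ 0, χ t = 0) ∧ (∀ t, R ≤ t → χ t = 1) := by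
  refine ⟨fun t => Real.smoothTransition (t / R),
    Real.smoothTransition.contDiff.comp (contDiff_id.div_const R), fun t ht => ?_, fun t ht => ?_⟩
  · exact Real.smoothTransition.zero_of_nonpos (div_nonpos_of_nonpos_of_nonneg ht hR.le)
  · exact Real.smoothTransition.one_of_one_le ((one_le_div hR).2 ht)

theorem exists_boundedContinuous_eq_deriv {χ : ℝ → ℝ} {a b c d : ℝ} (hχ : ContDiff ℝ 1 χ)
    (hleft : ∀ t ≤ a, χ t = c) (hright : ∀ t, b ≤ t → χ t = d) :
    ∃ g : ℝ →ᵇ ℝ, ∀ t, g t = deriv χ t := by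
  have hsupp : HasCompactSupport (deriv χ) := by
    refine .intro (isCompact_Icc (a := a) (b := b)) fun t ht => ?_
    rcases not_and_or.1 ht with ht | ht
    · have h : χ =ᶠ[𝓝 t] fun _ => c := eventually_of_mem (Iic_mem_nhds (not_le.1 ht)) hleft
      rw [h.deriv_eq, deriv_const]
    · have h : χ =ᶠ[𝓝 t] fun _ => d := eventually_of_mem (Ici_mem_nhds (not_le.1 ht)) hright
      rw [h.deriv_eq, deriv_const]
  exact ⟨ofCompactSupport _ (hχ.continuous_deriv le_rfl) hsupp, fun _ => rfl⟩

theorem exists_stretch {R : ℝ} {χ : ℝ → ℝ} (hχ : ContDiff ℝ 1 χ)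
    (hleft : ∀ t ≤ 0, χ t = 0) (hright : ∀ t, R ≤ t → χ t = 1) {s : ℝ}
    (hs : ∀ t, 0 < 1 + s * deriv χ t) :
    ∃ S : Stretch R (R + s), ∀ t, deriv S.e t = 1 + s * deriv χ t := by
  set f : ℝ → ℝ := fun t => t + s * χ t with hf
  have hd (t : ℝ) : HasDerivAt f (1 + s * deriv χ t) t :=
    (hasDerivAt_id t).add ((hχ.differentiable one_ne_zero t).hasDerivAt.const_mul s)
  have hmono : StrictMono f := strictMono_of_deriv_pos fun t => (hd t).deriv ▸ hs t
  have hfc : ContDiff ℝ 1 f := contDiff_id.add (contDiff_const.mul hχ)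
  -- `f` is the identity on `t ≤ 0` and the translation by `s` on `t ≥ R`.
  have hsurj : Function.Surjective f := by
    refine hfc.continuous.surjective ?_ ?_
    · refine (tendsto_atTop_add_const_right atTop s tendsto_id).congr' ?_
      filter_upwards [eventually_ge_atTop R] with t ht
      simp only [hf, hright t ht, mul_one, id_eq]
    · refine tendsto_id.congr' ?_
      filter_upwards [eventually_le_atBot 0] with t ht
      simp only [hf, hleft t ht, mul_zero, add_zero, id_eq]
  let e : ℝ ≃o ℝ := hmono.orderIsoOfSurjective f hsurj
  have hneg : χ (-1) = 0 := hleft _ (by norm_num)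
  refine ⟨⟨e, hfc, e.toHomeomorph.contDiff_symm_deriv (fun t => (hs t).ne') hd hfc,
    ?_, ?_, ?_⟩, fun t => (hd t).deriv⟩
  · simp [e, hf, hneg]
  · simp [e, hf, hleft]
  · simp [e, hf, hright]

theorem exists_eventually_stretch {R : ℝ} (hR : 0 < R) : ∃ g : ℝ →ᵇ ℝ, ∀ᶠ s in 𝓝 0,
    ∃ S : Stretch R (R + s), ∀ t, deriv S.e t = 1 + s * g t ∧ 0 < 1 + s * g t := by
  obtain ⟨χ, hχ, hleft, hright⟩ := exists_cutoff hR
  obtain ⟨g, hg⟩ := exists_boundedContinuous_eq_deriv hχ hleft hright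
  have hsmall : ∀ᶠ s : ℝ in 𝓝 0, |s| * ‖g‖ < 1 :=
    (continuous_abs.mul continuous_const).continuousAt.eventually (gt_mem_nhds (by simp))
  refine ⟨g, hsmall.mono fun s hs => ?_⟩
  have hpos (t : ℝ) : 0 < 1 + s * g t := by
    have : |s * g t| ≤ |s| * ‖g‖ := by
      rw [abs_mul]
      exact mul_le_mul_of_nonneg_left (g.norm_coe_le_norm t) (abs_nonneg s)
    linarith [neg_abs_le (s * g t)]
  obtain ⟨S, hS⟩ := exists_stretch hχ hleft hright fun t => hg t ▸ hpos t
  exact ⟨S, fun t => ⟨hg t ▸ hS t, hpos t⟩⟩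

end Stretch

/-! ### Analyticity of the first Rayleigh quotient -/

section Analyticity

open scoped BoundedContinuousFunction

variable {R s : ℝ} {g : ℝ →ᵇ ℝ}

/-- The Jacobian `1 + s g(x₁)` of a stretch in the first variable. -/
def stretchFst (g : ℝ →ᵇ ℝ) (s : ℝ) : ℝ × ℝ →ᵇ ℝ := 1 + s • g.compContinuous ContinuousMap.fst

/-- The Jacobian `1 + s g(x₂)` of a stretch in the second variable. -/
def stretchSnd (g : ℝ →ᵇ ℝ) (s : ℝ) : ℝ × ℝ →ᵇ ℝ := 1 + s • g.compContinuous ContinuousMap.snd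

theorem stretchFst_apply (g : ℝ →ᵇ ℝ) (s : ℝ) (p : ℝ × ℝ) :
    stretchFst g s p = 1 + s * g p.1 := rfl

theorem stretchSnd_apply (g : ℝ →ᵇ ℝ) (s : ℝ) (p : ℝ × ℝ) :
    stretchSnd g s p = 1 + s * g p.2 := rfl

theorem stretchFst_zero (g : ℝ →ᵇ ℝ) : stretchFst g 0 = 1 := by
  rw [stretchFst, zero_smul, add_zero]

theorem stretchSnd_zero (g : ℝ →ᵇ ℝ) : stretchSnd g 0 = 1 := by
  rw [stretchSnd, zero_smul, add_zero]

theorem eventually_isUnit_stretchFst (g : ℝ →ᵇ ℝ) : ∀ᶠ s in 𝓝 0, IsUnit (stretchFst g s) :=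
  eventually_isUnit_one_add_smul _

theorem eventually_isUnit_stretchSnd (g : ℝ →ᵇ ℝ) : ∀ᶠ s in 𝓝 0, IsUnit (stretchSnd g s) :=
  eventually_isUnit_one_add_smul _

/-- The form `∫ u²` on a stretched guide, pulled back to `Γ_R`. -/
def stretchedMass (R : ℝ) (g : ℝ →ᵇ ℝ) (s : ℝ) : EnergySpace R →L[ℝ] EnergySpace R :=
  weightedOp (component R 0) (stretchFst g s * stretchSnd g s)

/-- The form `∫ |∇u|²` on a stretched guide, pulled back to `Γ_R`. -/
def stretchedEnergy (R : ℝ) (g : ℝ →ᵇ ℝ) (s : ℝ) : EnergySpace R →L[ℝ] EnergySpace R :=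
  weightedOp (component R 1) (Ring.inverse (stretchFst g s) * stretchSnd g s) +
    weightedOp (component R 2) (Ring.inverse (stretchSnd g s) * stretchFst g s)

theorem analyticAt_stretchedMass (R : ℝ) (g : ℝ →ᵇ ℝ) : AnalyticAt ℝ (stretchedMass R g) 0 :=
  analyticAt_weightedOp _ ((analyticAt_one_add_smul _ 0).mul (analyticAt_one_add_smul _ 0))

theorem analyticAt_stretchedEnergy (R : ℝ) (g : ℝ →ᵇ ℝ) :
    AnalyticAt ℝ (stretchedEnergy R g) 0 :=
  (analyticAt_weightedOp _
    ((analyticAt_ringInverse_one_add_smul _).mul (analyticAt_one_add_smul _ 0))).add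
  (analyticAt_weightedOp _
    ((analyticAt_ringInverse_one_add_smul _).mul (analyticAt_one_add_smul _ 0)))

theorem isSymmetric_stretchedMass (R : ℝ) (g : ℝ →ᵇ ℝ) (s : ℝ) :
    (stretchedMass R g s : EnergySpace R →ₗ[ℝ] EnergySpace R).IsSymmetric :=
  isSymmetric_weightedOp _ _

theorem isSymmetric_stretchedEnergy (R : ℝ) (g : ℝ →ᵇ ℝ) (s : ℝ) :
    (stretchedEnergy R g s : EnergySpace R →ₗ[ℝ] EnergySpace R).IsSymmetric :=
  (isSymmetric_weightedOp _ _).add (isSymmetric_weightedOp _ _)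

theorem inner_stretchedMass_zero_self (g : ℝ →ᵇ ℝ) (v : EnergySpace R) :
    ⟪stretchedMass R g 0 v, v⟫ = ‖component R 0 v‖ ^ 2 := by
  rw [stretchedMass, stretchFst_zero, stretchSnd_zero, mul_one]
  exact inner_weightedOp_one_self _ v

theorem inner_stretchedEnergy_zero_self (g : ℝ →ᵇ ℝ) (v : EnergySpace R) :
    ⟪stretchedEnergy R g 0 v, v⟫ = ‖component R 1 v‖ ^ 2 + ‖component R 2 v‖ ^ 2 := by
  rw [stretchedEnergy, stretchFst_zero, stretchSnd_zero, Ring.inverse_one, mul_one]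
  exact (inner_add_left _ _ _).trans (congrArg₂ (· + ·) (inner_weightedOp_one_self _ v)
    (inner_weightedOp_one_self _ v))

theorem inner_stretchedMass_self (hR : 0 < R) (hRs : 0 < R + s) {S : Stretch R (R + s)}
    (hS : ∀ t, deriv S.e t = 1 + s * g t) {u : ℝ × ℝ → ℝ} {v : EnergySpace R}
    (hv : component R 0 v =ᵐ[volume.restrict (GamR R)] u ∘ S.planeMap) :
    ⟪stretchedMass R g s v, v⟫ = ∫ p in GamR (R + s), u p ^ 2 := by
  refine (inner_weightedOp_self_of_ae_eq hv _).trans ?_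
  rw [S.integral_GamR_comp_planeMap hR hRs]
  simp only [BoundedContinuousFunction.mul_apply, stretchFst_apply, stretchSnd_apply, hS,
    Function.comp_apply]

theorem inner_stretchedEnergy_self (hR : 0 < R) (hRs : 0 < R + s) {S : Stretch R (R + s)}
    (hS : ∀ t, deriv S.e t = 1 + s * g t ∧ 0 < 1 + s * g t)
    (hfst : IsUnit (stretchFst g s)) (hsnd : IsUnit (stretchSnd g s))
    {u : ℝ × ℝ → ℝ} (hu : ContDiff ℝ 1 u) {v : EnergySpace R}
    (hv : ∀ i, component R i v =ᵐ[volume.restrict (GamR R)] jet (u ∘ S.planeMap) i) :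
    ⟪stretchedEnergy R g s v, v⟫ = ∫ p in GamR (R + s), gradSq2 u p := by
  have hint (a : ℝ × ℝ →ᵇ ℝ) (i : Fin 3) :
      IntegrableOn (fun p => a p * jet (u ∘ S.planeMap) i p ^ 2) (GamR R) :=
    integrableOn_GamR
      (a.continuous.mul ((continuous_jet (hu.comp S.contDiff_planeMap) i).pow 2)) hR
  refine (inner_add_left _ _ _).trans ((congrArg₂ (· + ·)
    (inner_weightedOp_self_of_ae_eq (hv 1) _) (inner_weightedOp_self_of_ae_eq (hv 2) _)).trans ?_)
  rw [← integral_add (hint _ 1) (hint _ 2), S.integral_GamR_comp_planeMap hR hRs]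
  refine integral_congr_ae (.of_forall fun p => ?_)
  have hfst₁ : jet (u ∘ S.planeMap) 1 p = _ := S.fderiv_comp_planeMap_fst hu p
  have hsnd₂ : jet (u ∘ S.planeMap) 2 p = _ := S.fderiv_comp_planeMap_snd hu p
  have hne₁ := (hS p.1).2.ne'
  have hne₂ := (hS p.2).2.ne'
  simp only [BoundedContinuousFunction.mul_apply, boundedContinuous_ringInverse_apply hfst,
    boundedContinuous_ringInverse_apply hsnd, stretchFst_apply, stretchSnd_apply, hfst₁, hsnd₂,
    (hS _).1, gradSq2]
  field_simp

/-- The lower bounds of the Rayleigh quotient on `Γ_R`, in division-free form. -/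
def rayleighBounds (R : ℝ) : Set ℝ :=
  {c | ∀ u, AdmR R u → c * ∫ p in GamR R, u p ^ 2 ≤ ∫ p in GamR R, gradSq2 u p}

theorem pencilBounds_stretched (hR : 0 < R) (hRs : 0 < R + s) (S : Stretch R (R + s))
    (hS : ∀ t, deriv S.e t = 1 + s * g t ∧ 0 < 1 + s * g t)
    (hfst : IsUnit (stretchFst g s)) (hsnd : IsUnit (stretchSnd g s)) :
    pencilBounds (stretchedEnergy R g s) (stretchedMass R g s) = rayleighBounds (R + s) := by
  have heval {u : ℝ × ℝ → ℝ} (hu : AdmR (R + s) u) {v : EnergySpace R}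
      (hv : ∀ i, component R i v =ᵐ[volume.restrict (GamR R)] jet (u ∘ S.planeMap) i) (c : ℝ) :
      c * ⟪stretchedMass R g s v, v⟫ ≤ ⟪stretchedEnergy R g s v, v⟫ ↔
        c * ∫ p in GamR (R + s), u p ^ 2 ≤ ∫ p in GamR (R + s), gradSq2 u p := by
    rw [inner_stretchedMass_self hR hRs (fun t => (hS t).1) (hv 0),
      inner_stretchedEnergy_self hR hRs hS hfst hsnd hu.1 hv]
  ext c
  refine ⟨fun hc u hu => ?_, fun hc => ?_⟩
  · obtain ⟨v, hv⟩ := exists_component_ae_eq_jet hR (S.admR_comp_planeMap hR hRs hu)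
    exact (heval hu hv c).1 (hc v)
  · refine energySpace_induction (isClosed_le (by fun_prop) (by fun_prop)) fun u hu v hv => ?_
    have hcomp : (u ∘ S.symm.planeMap) ∘ S.planeMap = u :=
      funext fun p => congrArg u (S.planeMap_symm_planeMap p)
    have hadm := S.symm.admR_comp_planeMap hRs hR hu
    exact (heval hadm (hcomp.symm ▸ hv) c).2 (hc _ hadm)

theorem integral_gradSq2_nonneg (R : ℝ) (u : ℝ × ℝ → ℝ) : 0 ≤ ∫ p in GamR R, gradSq2 u p :=
  integral_nonneg fun _ => add_nonneg (sq_nonneg _) (sq_nonneg _)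

theorem lamR_mul_integral_sq_le {u : ℝ × ℝ → ℝ} (hu : AdmR R u) :
    lamR R * ∫ p in GamR R, u p ^ 2 ≤ ∫ p in GamR R, gradSq2 u p := by
  rcases (integral_nonneg fun p => sq_nonneg (u p) :
    0 ≤ ∫ p in GamR R, u p ^ 2).eq_or_lt with hzero | hpos
  · rw [← hzero, mul_zero]
    exact integral_gradSq2_nonneg R u
  · refine (le_div_iff₀ hpos).1 (csInf_le ⟨0, ?_⟩ ⟨u, hu, hpos.ne', rfl⟩)
    rintro _ ⟨w, -, -, rfl⟩
    exact div_nonneg (integral_gradSq2_nonneg R w) (integral_nonneg fun p => sq_nonneg (w p))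

theorem isGreatest_rayleighBounds_lamR (hR : 0 < R) : IsGreatest (rayleighBounds R) (lamR R) := by
  refine ⟨fun u hu => lamR_mul_integral_sq_le hu, fun c hc => ?_⟩
  obtain ⟨u, hu, hlt⟩ := exists_admR_integral_gradSq2_lt hR
  have hne : ∫ p in GamR R, u p ^ 2 ≠ 0 := fun h =>
    ((integral_gradSq2_nonneg R u).trans_lt hlt).ne' (by rw [h, mul_zero])
  refine le_csInf ⟨_, u, hu, hne, rfl⟩ ?_
  rintro _ ⟨w, hw, hw₀, rfl⟩
  have hpos := (integral_nonneg fun p => sq_nonneg (w p) :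
    0 ≤ ∫ p in GamR R, w p ^ 2).lt_of_ne' hw₀
  exact (le_div_iff₀ hpos).2 (hc w hw)

theorem lamR_lt_pi_sq (hR : 0 < R) : lamR R < π ^ 2 := by
  obtain ⟨u, hu, hlt⟩ := exists_admR_integral_gradSq2_lt hR
  exact lt_of_mul_lt_mul_right ((lamR_mul_integral_sq_le hu).trans_lt hlt)
    (integral_nonneg fun p => sq_nonneg (u p))

theorem analyticAt_lamR_add (hR : 0 < R) : AnalyticAt ℝ (fun s => lamR (R + s)) 0 := by
  obtain ⟨g, hg⟩ := exists_eventually_stretch hR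
  have hRs : ∀ᶠ s : ℝ in 𝓝 0, 0 < R + s :=
    (eventually_gt_nhds (neg_lt_zero.2 hR)).mono fun s hs => by linarith
  have hgreatest : ∀ᶠ s : ℝ in 𝓝 0, IsGreatest
      (pencilBounds (stretchedEnergy R g s) (stretchedMass R g s)) (lamR (R + s)) := by
    filter_upwards [hg, hRs, eventually_isUnit_stretchFst g, eventually_isUnit_stretchSnd g]
      with s ⟨S, hS⟩ hRs hfst hsnd
    rw [pencilBounds_stretched hR hRs S hS hfst hsnd]
    exact isGreatest_rayleighBounds_lamR hRs
  refine analyticAt_of_isGreatest_pencilBounds (δ := 1) (μ := π ^ 2) (e := cornerFunctional R)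
    (analyticAt_stretchedEnergy R g) (analyticAt_stretchedMass R g)
    (isSymmetric_stretchedEnergy R g) (isSymmetric_stretchedMass R g) hgreatest
    (fun v => ?_) (fun v => ?_) one_pos (fun v => ?_) ?_ (fun v => ?_)
  · rw [inner_stretchedEnergy_zero_self]
    positivity
  · rw [inner_stretchedMass_zero_self]
    positivity
  · rw [inner_stretchedEnergy_zero_self, inner_stretchedMass_zero_self, norm_sq_eq_sum_component]
    linarith
  · rw [add_zero]
    exact lamR_lt_pi_sq hR
  · rw [inner_stretchedEnergy_zero_self, inner_stretchedMass_zero_self]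
    exact pi_sq_mul_norm_sq_component_le hR v

end Analyticity

/-- Lemma 2.5: the function `R ↦ λ₁(Γ_R)` is real-analytic
on `(0,∞)`. -/
theorem lamR_analyticOn : AnalyticOnNhd ℝ lamR (Set.Ioi 0) := by
  intro R hR
  have hshift : AnalyticAt ℝ (fun r => lamR (R + (r - R))) R :=
    AnalyticAt.fun_comp (g := fun s => lamR (R + s)) (by simpa using analyticAt_lamR_add hR)
      (analyticAt_id.sub analyticAt_const)
  simpa only [add_sub_cancel] using hshift
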